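/- arXiv:2311.09203 — 3 statements merged into one kernel-verified Lean document; each statement's English description precedes it below -/
import Mathlib

section
/- Let 0<α<1 and let ϖ_n be the random variable counting the number of parts in a uniformly random restricted α-partition of n. Then ϖ_n is asymptotically normally distributed: P((ϖ_n − μ_n)/σ_n < x) = (1/√(2π))·∫_{−∞}^x e^{−t²/2} dt + o(1) uniformly in x as n→∞, where μ_n = ∑_{k≥1} g(k)/(e^{ηk}+1) and σ_n² = ∑_{k≥1} g(k)e^{ηk}/(e^{ηk}+1)² − (∑_{k≥1} g(k)k e^{ηk}/(e^{ηk}+1)²)² / (∑_{k≥1} g(k)k² e^{ηk}/(e^{ηk}+1)²), η>0 being the unique solution of n = ∑_{k≥1} k·g(k)/(e^{ηk}+1). Moreover E(ϖ_n) ∼ μ_n ∼ c₁·n^{1/(α+1)} and V(ϖ_n) ∼ σ_n² ∼ c₂·n^{1/(α+1)} for positive constants c₁, c₂ depending only on α. -/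
open Real Filter MeasureTheory

/-- `g α k` is the number of positive integers `n` with `⌊n^α⌋ = k`. -/
noncomputable def g (α : ℝ) (k : ℕ) : ℕ :=
  Set.ncard {n : ℕ | 1 ≤ n ∧ ⌊(n : ℝ) ^ α⌋ = (k : ℤ)}

/-- `qnm α n m`: number of restricted α-partitions of `n` with exactly `m` parts. -/
noncomputable def qnm (α : ℝ) (n m : ℕ) : ℕ :=
  Set.ncard {A : Finset ℕ | (∀ a ∈ A, 1 ≤ a) ∧ A.card = m ∧
    (∑ a ∈ A, ⌊(a : ℝ) ^ α⌋) = (n : ℤ)}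

/-- `qn α n`: total number of restricted α-partitions of `n`. -/
noncomputable def qn (α : ℝ) (n : ℕ) : ℕ :=
  Set.ncard {A : Finset ℕ | (∀ a ∈ A, 1 ≤ a) ∧
    (∑ a ∈ A, ⌊(a : ℝ) ^ α⌋) = (n : ℤ)}

/-- the mean `E(ϖ_n)` of the number of parts -/
noncomputable def partMean (α : ℝ) (n : ℕ) : ℝ :=
  (∑' m : ℕ, (m : ℝ) * qnm α n m) / qn α n

/-- the variance `V(ϖ_n)` of the number of parts -/
noncomputable def partVar (α : ℝ) (n : ℕ) : ℝ :=
  (∑' m : ℕ, ((m : ℝ) - partMean α n) ^ 2 * qnm α n m) / qn α n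

/-- `P(ϖ_n < y) = (1/q(n)) ∑_{m : m < y} q(n,m)` -/
noncomputable def cdf (α : ℝ) (n : ℕ) (y : ℝ) : ℝ :=
  (∑' m : ℕ, if (m : ℝ) < y then (qnm α n m : ℝ) else 0) / qn α n



/-- the size of the part with (shifted) index `a` -/
noncomputable def bb (α : ℝ) (a : ℕ) : ℕ := ⌊((a : ℝ) + 1) ^ α⌋₊

lemma bb_le (α : ℝ) (a : ℕ) : (bb α a : ℝ) ≤ ((a : ℝ) + 1) ^ α :=
  Nat.floor_le (by positivity)

lemma bb_gt (α : ℝ) (a : ℕ) : ((a : ℝ) + 1) ^ α - 1 < bb α a := by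
  have := Nat.lt_floor_add_one (((a : ℝ) + 1) ^ α)
  unfold bb; linarith

lemma bb_pos {α : ℝ} (hα : 0 < α) (a : ℕ) : 1 ≤ bb α a := by
  unfold bb
  rw [Nat.one_le_floor_iff]
  exact Real.one_le_rpow (by linarith [(Nat.cast_nonneg a : (0:ℝ) ≤ a)]) hα.le

lemma bb_surj {α : ℝ} (hα : 0 < α) (hα1 : α < 1) (k : ℕ) (hk : 1 ≤ k) : ∃ a, bb α a = k := by
  have hk' : (1:ℝ) ≤ k := by exact_mod_cast hk
  have hp : (1:ℝ) ≤ (k:ℝ) ^ (1/α) := Real.one_le_rpow hk' (by positivity)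
  have h1 : 1 ≤ ⌈(k:ℝ) ^ (1/α)⌉₊ := Nat.one_le_ceil_iff.2 (by linarith)
  refine ⟨⌈(k:ℝ) ^ (1/α)⌉₊ - 1, ?_⟩
  unfold bb
  rw [Nat.floor_eq_iff (by positivity)]
  have hc : ((⌈(k:ℝ) ^ (1/α)⌉₊ - 1 : ℕ) : ℝ) + 1 = (⌈(k:ℝ) ^ (1/α)⌉₊ : ℝ) := by
    rw [Nat.cast_sub h1]; simp
  rw [hc]
  have hkk : ((k:ℝ) ^ (1/α)) ^ α = k := by
    rw [← Real.rpow_mul (by positivity)]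
    rw [one_div, inv_mul_cancel₀ hα.ne', Real.rpow_one]
  constructor
  · calc (k:ℝ) = ((k:ℝ) ^ (1/α)) ^ α := hkk.symm
      _ ≤ _ := Real.rpow_le_rpow (by positivity) (Nat.le_ceil _) hα.le
  · calc (⌈(k:ℝ) ^ (1/α)⌉₊ : ℝ) ^ α < ((k:ℝ) ^ (1/α) + 1) ^ α :=
        Real.rpow_lt_rpow (by positivity) (Nat.ceil_lt_add_one (by positivity)) hα
      _ ≤ ((k:ℝ) ^ (1/α)) ^ α + 1 ^ α :=
        Real.rpow_add_le_add_rpow (by positivity) (by norm_num) hα.le hα1.le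
      _ = k + 1 := by rw [hkk, Real.one_rpow]

lemma g_eq {α : ℝ} (k : ℕ) : g α k = Nat.card (bb α ⁻¹' {k}) := by
  unfold g
  rw [Nat.card_coe_set_eq]
  have : {n : ℕ | 1 ≤ n ∧ ⌊(n : ℝ) ^ α⌋ = (k : ℤ)} = Nat.succ '' (bb α ⁻¹' {k}) := by
    ext n
    simp only [Set.mem_ofPred_eq, Set.mem_image, Set.mem_preimage, Set.mem_singleton_iff]
    constructor
    · rintro ⟨h1, h2⟩
      refine ⟨n - 1, ?_, by omega⟩
      have : ((n - 1 : ℕ) : ℝ) + 1 = n := by rw [Nat.cast_sub h1]; simp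
      unfold bb; rw [this]
      have := Int.natCast_floor_eq_floor (a := (n:ℝ)^α) (by positivity)
      omega
    · rintro ⟨a, h, rfl⟩
      refine ⟨by omega, ?_⟩
      unfold bb at h
      have := Int.natCast_floor_eq_floor (a := ((a.succ : ℕ):ℝ)^α) (by positivity)
      rw [← this]; push_cast; rw [h]
  rw [this, Set.ncard_image_of_injective _ Nat.succ_injective]

lemma g_fib_aux {α : ℝ} {F : ℕ → ℝ} (k : ℕ) :
    (g α k : ℝ) * F k = ∑' (b : ↑(bb α ⁻¹' {k})), F (bb α ↑b) := by
  rw [g_eq]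
  have : (fun x : (bb α ⁻¹' {k}) => F (bb α x)) = fun _ => F k := by
    funext x
    have := x.2
    simp only [Set.mem_preimage, Set.mem_singleton_iff] at this
    rw [this]
  rw [this, tsum_const]
  simp

lemma hasSum_g {α : ℝ} {F : ℕ → ℝ} {s : ℝ} (h : HasSum (fun a => F (bb α a)) s) :
    HasSum (fun k => (g α k : ℝ) * F k) s := by
  have := h.tsum_fiberwise (bb α)
  have heq : (fun k => (g α k : ℝ) * F k)
      = fun c => ∑' (b : ↑(bb α ⁻¹' {c})), F (bb α ↑b) := by
    funext k
    exact g_fib_aux k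
  rw [heq]; exact this

lemma expo_int {α : ℝ} (hα : 0 < α) :
    IntegrableOn (fun y : ℝ => Real.exp (-(y ^ α) / 2)) (Set.Ioi 0) := by
  have := integrableOn_rpow_mul_exp_neg_mul_rpow (p := α) (s := 0) (b := 1/2)
    (by norm_num) hα (by norm_num)
  refine this.congr_fun (fun y hy => ?_) measurableSet_Ioi
  simp only [Real.rpow_zero, one_mul]
  congr 1; ring

lemma step_bound {α : ℝ} (hα : 0 < α) {h : ℝ} (hh : 0 < h) {y : ℝ} (hy : 0 < y) :
    y ^ α - h ≤ h * bb α ⌊y / h ^ (1/α)⌋₊ ∧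
    h * bb α ⌊y / h ^ (1/α)⌋₊ ≤ (y + h ^ (1/α)) ^ α := by
  have hc : 0 < h ^ (1/α) := by positivity
  set c := h ^ (1/α) with hcdef
  have hcα : c ^ α = h := by
    rw [hcdef, ← Real.rpow_mul hh.le, one_div, inv_mul_cancel₀ hα.ne', Real.rpow_one]
  have h1 := bb_le α ⌊y / c⌋₊
  have h2 := bb_gt α ⌊y / c⌋₊
  have h3 := Nat.lt_floor_add_one (y / c)
  have h4 := Nat.floor_le (a := y / c) (by positivity)
  constructor
  · have : (y / c) ^ α ≤ ((⌊y / c⌋₊ : ℝ) + 1) ^ α :=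
      Real.rpow_le_rpow (by positivity) h3.le hα.le
    rw [Real.div_rpow hy.le hc.le, hcα] at this
    have : y ^ α / h - 1 ≤ bb α ⌊y / c⌋₊ := by linarith
    calc y ^ α - h = h * (y ^ α / h - 1) := by field_simp
      _ ≤ _ := by gcongr
  · have : ((⌊y / c⌋₊ : ℝ) + 1) ^ α ≤ ((y + c) / c) ^ α := by
      apply Real.rpow_le_rpow (by positivity) _ hα.le
      rw [add_div, div_self hc.ne']; linarith
    rw [Real.div_rpow (by positivity) hc.le, hcα] at this
    calc h * (bb α ⌊y / c⌋₊ : ℝ) ≤ h * ((y + c) ^ α / h) := by gcongr; linarith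
      _ = _ := by field_simp

/-- exponentially bounded functions -/
def ExpB (H : ℝ → ℝ) : Prop := ∃ C, ∀ x, 0 ≤ x → |H x| ≤ C * Real.exp (-x / 2)

lemma hasSum_cg {u v : ℕ → ℝ} {s : ℝ} (h : HasSum u s) (huv : ∀ a, u a = v a) : HasSum v s := by
  rwa [← funext huv]

lemma step_hasSum {α : ℝ} (hα : 0 < α) {h : ℝ} (hh : 0 < h) {H : ℝ → ℝ} (hH : ExpB H) :
    HasSum (fun a => h ^ (1/α) * H (h * bb α a))
      (∫ y in Set.Ioi (0:ℝ), H (h * bb α ⌊y / h ^ (1/α)⌋₊)) := by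
  obtain ⟨C, hC⟩ := hH
  have hC0 : 0 ≤ C := by
    have := hC 0 le_rfl
    simp at this
    exact (abs_nonneg _).trans this
  have hc : 0 < h ^ (1/α) := by positivity
  set c := h ^ (1/α) with hcdef
  have hmeas : Measurable (fun y : ℝ => H (h * bb α ⌊y / c⌋₊)) := by
    have h1 : Measurable (fun n : ℕ => H (h * bb α n)) := measurable_from_top
    exact h1.comp (Nat.measurable_floor.comp (measurable_id.div_const c))
  have hIntg : IntegrableOn (fun y : ℝ => H (h * bb α ⌊y / c⌋₊)) (Set.Ioi 0) := by
    refine Integrable.mono' ((expo_int hα).const_mul (C * Real.exp (h / 2)))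
      hmeas.aestronglyMeasurable ?_
    refine (ae_restrict_iff' measurableSet_Ioi).2 (Eventually.of_forall fun y hy => ?_)
    refine (hC _ (by positivity)).trans ?_
    rw [mul_assoc, ← Real.exp_add]
    gcongr
    have := (step_bound hα hh (show 0 < y from hy)).1
    linarith
  have hU : (⋃ a : ℕ, Set.Ico ((a:ℝ) * c) (((a:ℝ) + 1) * c)) = Set.Ici 0 := by
    ext y
    simp only [Set.mem_iUnion, Set.mem_Ico, Set.mem_Ici]
    constructor
    · rintro ⟨a, h1, h2⟩
      exact le_trans (by positivity) h1
    · intro hy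
      refine ⟨⌊y / c⌋₊, ?_, ?_⟩
      · rw [← le_div_iff₀ hc]; exact Nat.floor_le (by positivity)
      · rw [← div_lt_iff₀ hc]; exact Nat.lt_floor_add_one _
  have hfl : ∀ a : ℕ, ∀ y ∈ Set.Ico ((a:ℝ) * c) (((a:ℝ) + 1) * c), ⌊y / c⌋₊ = a := by
    intro a y hy
    have h0 : 0 ≤ y := le_trans (by positivity) hy.1
    rw [Nat.floor_eq_iff (by positivity), le_div_iff₀ hc, div_lt_iff₀ hc]
    exact hy
  have hd : Pairwise (Function.onFun Disjoint
      (fun a : ℕ => Set.Ico ((a:ℝ) * c) (((a:ℝ) + 1) * c))) := by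
    intro i j hij
    refine Set.disjoint_left.2 fun y h1 h2 => hij ?_
    rw [← hfl i y h1, ← hfl j y h2]
  have := hasSum_integral_iUnion (μ := volume) (fun a : ℕ => measurableSet_Ico) hd
    (f := fun y : ℝ => H (h * bb α ⌊y / c⌋₊))
    (by rw [hU]; exact (integrableOn_Ici_iff_integrableOn_Ioi (by simp)).2 hIntg)
  rw [hU, integral_Ici_eq_integral_Ioi] at this
  refine hasSum_cg this fun a => ?_
  rw [setIntegral_congr_fun measurableSet_Ico
    (g := fun _ => H (h * bb α a)) (fun y hy => by simp only [hfl a y hy])]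
  rw [setIntegral_const]
  simp only [Measure.real, Real.volume_Ico, smul_eq_mul]
  rw [ENNReal.toReal_ofReal (by nlinarith)]
  ring

lemma summ_H {α : ℝ} (hα : 0 < α) {h : ℝ} (hh : 0 < h) {H : ℝ → ℝ} (hH : ExpB H) :
    Summable (fun a => H (h * bb α a)) := by
  have := (step_hasSum hα hh hH).summable
  have hc : 0 < h ^ (1/α) := by positivity
  exact (summable_mul_left_iff hc.ne').1 this

lemma riemann {α : ℝ} (hα : 0 < α) {H : ℝ → ℝ} (hH : ExpB H) (hcont : Continuous H) :
    Tendsto (fun h : ℝ => h ^ (1/α) * ∑' a, H (h * bb α a)) (nhdsWithin 0 (Set.Ioi 0))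
      (nhds (∫ y in Set.Ioi (0:ℝ), H (y ^ α))) := by
  have h1 : ∀ᶠ h in nhdsWithin (0:ℝ) (Set.Ioi 0), 
      ∫ y in Set.Ioi (0:ℝ), H (h * bb α ⌊y / h ^ (1/α)⌋₊) = h ^ (1/α) * ∑' a, H (h * bb α a) := by
    filter_upwards [self_mem_nhdsWithin] with h hh
    rw [← (step_hasSum hα hh hH).tsum_eq, tsum_mul_left]
  refine Tendsto.congr' h1 ?_
  obtain ⟨C, hC⟩ := hH
  have hC0 : 0 ≤ C := by
    have := hC 0 le_rfl
    simp at this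
    exact (abs_nonneg _).trans this
  refine tendsto_integral_filter_of_dominated_convergence
    (fun y => (C * Real.exp (1 / 2)) * Real.exp (-(y ^ α) / 2)) ?_ ?_ ?_ ?_
  · refine Eventually.of_forall fun h => ?_
    have h1 : Measurable (fun n : ℕ => H (h * bb α n)) := measurable_from_top
    exact (h1.comp (Nat.measurable_floor.comp (measurable_id.div_const _))).aestronglyMeasurable
  · have : ∀ᶠ h in nhdsWithin (0:ℝ) (Set.Ioi 0), h < 1 :=
      nhdsWithin_le_nhds (gt_mem_nhds one_pos)
    filter_upwards [self_mem_nhdsWithin, this] with h hh hh1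
    have hh : 0 < h := hh
    refine (ae_restrict_iff' measurableSet_Ioi).2 (Eventually.of_forall fun y hy => ?_)
    refine (hC _ (by positivity)).trans ?_
    rw [mul_assoc, ← Real.exp_add]
    gcongr
    have := (step_bound hα hh (show 0 < y from hy)).1
    linarith
  · exact (expo_int hα).const_mul _
  · refine (ae_restrict_iff' measurableSet_Ioi).2 (Eventually.of_forall fun y hy => ?_)
    have hy : 0 < y := hy
    refine (hcont.tendsto _).comp ?_
    have hid : Tendsto (fun h : ℝ => h) (nhdsWithin 0 (Set.Ioi 0)) (nhds 0) :=
      tendsto_nhdsWithin_of_tendsto_nhds tendsto_id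
    have t1 : Tendsto (fun h : ℝ => y ^ α - h) (nhdsWithin 0 (Set.Ioi 0)) (nhds (y ^ α)) := by
      simpa using hid.const_sub (y ^ α)
    have t2 : Tendsto (fun h : ℝ => (y + h ^ (1/α)) ^ α) (nhdsWithin 0 (Set.Ioi 0))
        (nhds (y ^ α)) := by
      have e1 : Tendsto (fun h : ℝ => h ^ (1/α)) (nhdsWithin 0 (Set.Ioi 0)) (nhds 0) := by
        have := hid.rpow_const (p := 1/α) (Or.inr (by positivity))
        rwa [Real.zero_rpow (by positivity)] at this
      have e2 := (e1.const_add y).rpow_const (p := α) (Or.inr hα.le)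
      simpa using e2
    refine tendsto_of_tendsto_of_tendsto_of_le_of_le' t1 t2 ?_ ?_
    · filter_upwards [self_mem_nhdsWithin] with h hh
      exact (step_bound hα hh hy).1
    · filter_upwards [self_mem_nhdsWithin] with h hh
      exact (step_bound hα hh hy).2


noncomputable def ff (x : ℝ) : ℝ := 1 / (Real.exp x + 1)
noncomputable def ww (x : ℝ) : ℝ := Real.exp x / (Real.exp x + 1) ^ 2

lemma ff_pos (x : ℝ) : 0 < ff x := by unfold ff; positivity
lemma ww_pos (x : ℝ) : 0 < ww x := by unfold ww; positivity
lemma ff_lt_one (x : ℝ) : ff x < 1 := by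
  unfold ff; rw [div_lt_one (by positivity)]; linarith [Real.exp_pos x]
lemma ww_eq (x : ℝ) : ww x = ff x * (1 - ff x) := by
  unfold ww ff; field_simp; ring
lemma ww_le_ff (x : ℝ) : ww x ≤ ff x := by
  rw [ww_eq]; nlinarith [ff_pos x, ff_lt_one x]
lemma ff_le (x : ℝ) : ff x ≤ Real.exp (-x) := by
  unfold ff; rw [Real.exp_neg, one_div]
  apply inv_anti₀ (Real.exp_pos x); linarith
lemma ww_le (x : ℝ) : ww x ≤ Real.exp (-x) := (ww_le_ff x).trans (ff_le x)
lemma ff_cont : Continuous ff := by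
  unfold ff; exact continuous_const.div (by fun_prop) (fun x => by positivity)
lemma ww_cont : Continuous ww := by
  unfold ww; exact Continuous.div (by fun_prop) (by fun_prop) (fun x => by positivity)

lemma expB_pow {G : ℝ → ℝ} (hG : ∀ x, 0 ≤ x → |G x| ≤ Real.exp (-x)) (j : ℕ) :
    ExpB (fun x => x ^ j * G x) := by
  refine ⟨2 ^ j * (j.factorial : ℝ), fun x hx => ?_⟩
  rw [abs_mul, abs_of_nonneg (by positivity : (0:ℝ) ≤ x ^ j)]
  have h1 := Real.pow_div_factorial_le_exp (x / 2) (by positivity) j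
  rw [div_le_iff₀ (by positivity), div_pow, div_le_iff₀ (by positivity)] at h1
  calc x ^ j * |G x| ≤ (Real.exp (x/2) * j.factorial * 2 ^ j) * Real.exp (-x) :=
        mul_le_mul h1 (hG x hx) (abs_nonneg _) (by positivity)
    _ = 2 ^ j * j.factorial * (Real.exp (x/2) * Real.exp (-x)) := by ring
    _ = _ := by rw [← Real.exp_add]; congr 2; ring

lemma expB_ff (j : ℕ) : ExpB (fun x => x ^ j * ff x) :=
  expB_pow (fun x _ => by rw [abs_of_pos (ff_pos x)]; exact ff_le x) j
lemma expB_ww (j : ℕ) : ExpB (fun x => x ^ j * ww x) :=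
  expB_pow (fun x _ => by rw [abs_of_pos (ww_pos x)]; exact ww_le x) j
lemma cont_ff (j : ℕ) : Continuous (fun x => x ^ j * ff x) := (continuous_pow j).mul ff_cont
lemma cont_ww (j : ℕ) : Continuous (fun x => x ^ j * ww x) := (continuous_pow j).mul ww_cont

lemma ExpB.mono {G H : ℝ → ℝ} (hG : ExpB G) (h : ∀ x, 0 ≤ x → |H x| ≤ |G x|) : ExpB H := by
  obtain ⟨C, hC⟩ := hG
  exact ⟨C, fun x hx => (h x hx).trans (hC x hx)⟩

lemma int_H {α : ℝ} (hα : 0 < α) {H : ℝ → ℝ} (hH : ExpB H) (hc : Continuous H) :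
    IntegrableOn (fun y : ℝ => H (y ^ α)) (Set.Ioi 0) := by
  obtain ⟨C, hC⟩ := hH
  refine Integrable.mono' ((expo_int hα).const_mul C) ?_ ?_
  · exact (hc.comp (Real.continuous_rpow_const hα.le)).aestronglyMeasurable
  · refine (ae_restrict_iff' measurableSet_Ioi).2 (Eventually.of_forall fun y hy => ?_)
    have hy : 0 < y := hy
    exact (hC _ (by positivity)).trans (by gcongr)

lemma int_pos {α : ℝ} (hα : 0 < α) {H : ℝ → ℝ} (hH : ExpB H) (hc : Continuous H)
    (h0 : ∀ x, 0 ≤ x → 0 ≤ H x) {x : ℝ} (hx : 0 < x) (hHx : 0 < H x) :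
    0 < ∫ y in Set.Ioi (0:ℝ), H (y ^ α) := by
  rw [setIntegral_pos_iff_support_of_nonneg_ae _ (int_H hα hH hc)]
  · have hcc : Continuous (fun y : ℝ => H (y ^ α)) := hc.comp (Real.continuous_rpow_const hα.le)
    have ho : IsOpen ({y : ℝ | 0 < H (y ^ α)} ∩ Set.Ioi 0) :=
      (isOpen_lt continuous_const hcc).inter isOpen_Ioi
    have hne : ({y : ℝ | 0 < H (y ^ α)} ∩ Set.Ioi 0).Nonempty := by
      refine ⟨x ^ (1/α), ?_, ?_⟩
      · show 0 < H ((x ^ (1/α)) ^ α)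
        rw [← Real.rpow_mul hx.le, one_div, inv_mul_cancel₀ hα.ne', Real.rpow_one]
        exact hHx
      · exact Real.rpow_pos_of_pos hx _
    refine lt_of_lt_of_le (ho.measure_pos volume hne) (measure_mono ?_)
    rintro y ⟨h1, h2⟩
    exact ⟨ne_of_gt h1, h2⟩
  · refine (ae_restrict_iff' measurableSet_Ioi).2 (Eventually.of_forall fun y hy => ?_)
    have hy : 0 < y := hy
    exact h0 _ (by positivity)

/-- the basic integrals -/
noncomputable def II (α : ℝ) (H : ℝ → ℝ) : ℝ := ∫ y in Set.Ioi (0:ℝ), H (y ^ α)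

lemma II_ff_pos {α : ℝ} (hα : 0 < α) (j : ℕ) : 0 < II α (fun x => x ^ j * ff x) :=
  int_pos hα (expB_ff j) (cont_ff j) (fun x hx => mul_nonneg (by positivity) (ff_pos x).le)
    (x := 1) one_pos (by have := ff_pos 1; positivity)
lemma II_ww_pos {α : ℝ} (hα : 0 < α) (j : ℕ) : 0 < II α (fun x => x ^ j * ww x) :=
  int_pos hα (expB_ww j) (cont_ww j) (fun x hx => mul_nonneg (by positivity) (ww_pos x).le)
    (x := 1) one_pos (by have := ww_pos 1; positivity)

/-- the limiting variance constant -/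
noncomputable def tau (α : ℝ) : ℝ :=
  II α (fun x => x ^ 0 * ww x) - II α (fun x => x ^ 1 * ww x) ^ 2 / II α (fun x => x ^ 2 * ww x)

lemma tau_pos {α : ℝ} (hα : 0 < α) : 0 < tau α := by
  set l := II α (fun x => x ^ 1 * ww x) / II α (fun x => x ^ 2 * ww x) with hl
  have h2 := II_ww_pos hα 2
  have h1 := II_ww_pos hα 1
  have hlpos : 0 < l := by positivity
  have key : tau α = ∫ y in Set.Ioi (0:ℝ), (fun x => (1 - l * x) ^ 2 * ww x) (y ^ α) := by
    have e : ∀ y : ℝ, (fun x => (1 - l * x) ^ 2 * ww x) (y ^ α)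
        = ((fun x => x ^ 0 * ww x) (y ^ α) - 2 * l * (fun x => x ^ 1 * ww x) (y ^ α))
          + l ^ 2 * (fun x => x ^ 2 * ww x) (y ^ α) := by intro y; simp only; ring
    simp_rw [e]
    rw [integral_add, integral_sub, integral_const_mul, integral_const_mul]
    · change _ = II α (fun x => x ^ 0 * ww x) - 2 * l * II α (fun x => x ^ 1 * ww x)
        + l ^ 2 * II α (fun x => x ^ 2 * ww x)
      rw [hl]; unfold tau; field_simp; ring
    · exact int_H hα (expB_ww 0) (cont_ww 0)
    · exact (int_H hα (expB_ww 1) (cont_ww 1)).const_mul _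
    · exact (int_H hα (expB_ww 0) (cont_ww 0)).sub ((int_H hα (expB_ww 1) (cont_ww 1)).const_mul _)
    · exact (int_H hα (expB_ww 2) (cont_ww 2)).const_mul _
  rw [key]
  have hcont : Continuous (fun x => (1 - l * x) ^ 2 * ww x) := by
    have := ww_cont; fun_prop
  refine int_pos hα ?_ hcont (fun x hx => mul_nonneg (by positivity) (ww_pos x).le)
    (x := 2 / l) (by positivity) ?_
  · obtain ⟨C0, h0⟩ := expB_ww 0
    obtain ⟨C2, h2⟩ := expB_ww 2
    refine ⟨2 * C0 + 2 * l ^ 2 * C2, fun x hx => ?_⟩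
    have a0 := h0 x hx
    have a2 := h2 x hx
    have hw := ww_pos x
    rw [abs_of_nonneg (by positivity)] at a0 a2 ⊢
    have : (1 - l * x) ^ 2 * ww x ≤ 2 * (x ^ 0 * ww x) + 2 * l ^ 2 * (x ^ 2 * ww x) := by
      nlinarith [mul_nonneg (sq_nonneg (1 + l * x)) hw.le]
    calc _ ≤ _ := this
      _ ≤ 2 * (C0 * Real.exp (-x/2)) + 2 * l ^ 2 * (C2 * Real.exp (-x/2)) := by gcongr
      _ = _ := by ring
  · have : l * (2 / l) = 2 := by field_simp
    have hw := ww_pos (2 / l)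
    simp only [this]
    norm_num
    exact hw

/-- sums over all part indices -/
noncomputable def TT (α : ℝ) (H : ℝ → ℝ) (h : ℝ) : ℝ := ∑' a, H (h * bb α a)

lemma TT_tendsto {α : ℝ} (hα : 0 < α) {H : ℝ → ℝ} (hH : ExpB H) (hcont : Continuous H) :
    Tendsto (fun h : ℝ => h ^ (1/α) * TT α H h) (nhdsWithin 0 (Set.Ioi 0))
      (nhds (II α H)) := riemann hα hH hcont

lemma TT_nonneg {α : ℝ} {H : ℝ → ℝ} {h : ℝ} (hh : 0 < h) (h0 : ∀ x, 0 ≤ x → 0 ≤ H x) :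
    0 ≤ TT α H h := tsum_nonneg fun a => h0 _ (by positivity)

lemma tsum_g_eq {α : ℝ} (hα : 0 < α) {h : ℝ} (hh : 0 < h) {G : ℝ → ℝ} (j : ℕ)
    (hG : ExpB (fun x => x ^ j * G x)) {u : ℕ → ℝ}
    (hu : ∀ k : ℕ, u k = (g α k : ℝ) * ((k : ℝ) ^ j * G (h * k))) :
    HasSum u ((h ^ j)⁻¹ * TT α (fun x => x ^ j * G x) h) := by
  have h1 := (summ_H hα hh hG).hasSum.mul_left ((h ^ j)⁻¹)
  have h2 : HasSum (fun a => (bb α a : ℝ) ^ j * G (h * bb α a))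
      ((h ^ j)⁻¹ * TT α (fun x => x ^ j * G x) h) := by
    refine hasSum_cg h1 fun a => ?_
    have : h ^ j ≠ 0 := by positivity
    rw [mul_pow, ← mul_assoc, ← mul_assoc, inv_mul_cancel₀ this, one_mul]
  exact hasSum_cg (hasSum_g (F := fun k : ℕ => (k : ℝ) ^ j * G (h * k)) h2) fun k => (hu k).symm

/-- expected total size under the Boltzmann measure -/
noncomputable def NN (α h : ℝ) : ℝ := h⁻¹ * TT α (fun x => x ^ 1 * ff x) h

lemma NN_eq {α : ℝ} (hα : 0 < α) {h : ℝ} (hh : 0 < h) :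
    ∑' k : ℕ, (k : ℝ) * g α k / (Real.exp (h * k) + 1) = NN α h := by
  have := (tsum_g_eq hα hh 1 (expB_ff 1)
    (u := fun k : ℕ => (k : ℝ) * g α k / (Real.exp (h * k) + 1))
    (fun k => by unfold ff; ring)).tsum_eq
  rw [this]; simp [NN]

lemma NN_hasSum {α : ℝ} (hα : 0 < α) {h : ℝ} (hh : 0 < h) :
    HasSum (fun a => (bb α a : ℝ) * ff (h * bb α a)) (NN α h) := by
  refine hasSum_cg ((summ_H hα hh (expB_ff 1)).hasSum.mul_left h⁻¹) fun a => ?_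
  field_simp

lemma ff_anti {x y : ℝ} (h : x < y) : ff y < ff x := by
  unfold ff
  apply one_div_lt_one_div_of_lt (by positivity)
  have := Real.exp_lt_exp.2 h
  linarith

lemma NN_anti {α : ℝ} (hα : 0 < α) {h k : ℝ} (hh : 0 < h) (hk : h < k) : NN α k < NN α h := by
  rw [← (NN_hasSum hα hh).tsum_eq, ← (NN_hasSum hα (hh.trans hk)).tsum_eq]
  have hb : ∀ a, (0:ℝ) < bb α a := fun a => by exact_mod_cast bb_pos hα a
  have : ∀ a, (bb α a : ℝ) * ff (k * bb α a) < (bb α a : ℝ) * ff (h * bb α a) := fun a =>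
    mul_lt_mul_of_pos_left (ff_anti (mul_lt_mul_of_pos_right hk (hb a))) (hb a)
  exact Summable.tsum_lt_tsum (i := 0) (fun a => (this a).le) (this 0)
    (NN_hasSum hα (hh.trans hk)).summable (NN_hasSum hα hh).summable

lemma NN_atTop {α : ℝ} (hα : 0 < α) :
    Tendsto (NN α) (nhdsWithin 0 (Set.Ioi 0)) atTop := by
  have h1 := TT_tendsto hα (expB_ff 1) (cont_ff 1)
  have h2 : Tendsto (fun h : ℝ => (h ^ (1 + 1/α))⁻¹) (nhdsWithin 0 (Set.Ioi 0)) atTop := by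
    apply Tendsto.inv_tendsto_nhdsGT_zero
    rw [tendsto_nhdsWithin_iff]
    constructor
    · have hid : Tendsto (fun h : ℝ => h) (nhdsWithin 0 (Set.Ioi 0)) (nhds 0) :=
        tendsto_nhdsWithin_of_tendsto_nhds tendsto_id
      have := hid.rpow_const (p := 1 + 1/α) (Or.inr (by positivity))
      rwa [Real.zero_rpow (by positivity)] at this
    · filter_upwards [self_mem_nhdsWithin] with h hh
      exact Real.rpow_pos_of_pos hh _
  refine (h2.atTop_mul_pos (II_ff_pos hα 1) h1).congr' ?_
  filter_upwards [self_mem_nhdsWithin] with h hh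
  have hh : 0 < h := hh
  rw [Real.rpow_add hh, Real.rpow_one]
  unfold NN
  have : 0 < h ^ (1/α) := by positivity
  field_simp

lemma NN_cont {α : ℝ} (hα : 0 < α) : ContinuousOn (NN α) (Set.Ioi 0) := by
  intro x hx
  have hx : 0 < x := hx
  have hc : ContinuousOn (fun h => ∑' a, (bb α a : ℝ) * ff (h * bb α a)) (Set.Ioi (x/2)) := by
    refine continuousOn_tsum (u := fun a => (bb α a : ℝ) * ff (x/2 * bb α a)) ?_
      (NN_hasSum hα (half_pos hx)).summable ?_
    · intro a
      have := ff_cont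
      fun_prop
    · intro a h hh
      have hh : x / 2 < h := hh
      have hb : (0:ℝ) < bb α a := by exact_mod_cast bb_pos hα a
      rw [Real.norm_of_nonneg (mul_nonneg hb.le (ff_pos _).le)]
      exact mul_le_mul_of_nonneg_left (ff_anti (mul_lt_mul_of_pos_right hh hb)).le hb.le
  have hmem : Set.Ioi (x/2) ∈ nhds x := Ioi_mem_nhds (by linarith)
  have h2 := (hc.continuousAt hmem)
  refine (h2.congr ?_).continuousWithinAt
  filter_upwards [hmem] with h hh
  have hh : x / 2 < h := hh
  exact (NN_hasSum hα (by linarith)).tsum_eq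

lemma NN_zero {α : ℝ} (hα : 0 < α) {ε : ℝ} (hε : 0 < ε) : ∃ h, 0 < h ∧ NN α h < ε := by
  have key : ∀ h : ℝ, 1 ≤ h → NN α h ≤ Real.exp (-(h - 1)) * (∑' a, (1 * bb α a : ℝ) ^ 1
      * Real.exp (-(1 * bb α a))) := by
    intro h hh
    rw [← (NN_hasSum hα (by linarith : 0 < h)).tsum_eq, ← tsum_mul_left]
    have hs : Summable (fun a => (1 * bb α a : ℝ) ^ 1 * Real.exp (-(1 * bb α a))) :=
      summ_H hα one_pos (expB_pow (G := fun x => Real.exp (-x)) (fun x _ => by simp) 1)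
    refine (NN_hasSum hα (by linarith : 0 < h)).summable.tsum_le_tsum (fun a => ?_)
      (hs.mul_left _)
    have hb : (1:ℝ) ≤ bb α a := by exact_mod_cast bb_pos hα a
    calc (bb α a : ℝ) * ff (h * bb α a) ≤ bb α a * Real.exp (-(h * bb α a)) := by
          gcongr; exact ff_le _
      _ ≤ bb α a * Real.exp (-(h - 1) + -(1 * bb α a)) := by
          gcongr; nlinarith
      _ = _ := by rw [Real.exp_add]; ring
  have hl : Tendsto (fun h : ℝ => Real.exp (-(h - 1)) * (∑' a, (1 * bb α a : ℝ) ^ 1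
      * Real.exp (-(1 * bb α a)))) atTop (nhds (0 * (∑' a, (1 * bb α a : ℝ) ^ 1
      * Real.exp (-(1 * bb α a))))) := by
    refine Tendsto.mul_const _ (Real.tendsto_exp_neg_atTop_nhds_zero.comp ?_)
    exact tendsto_atTop_add_const_right _ _ tendsto_id
  rw [zero_mul] at hl
  obtain ⟨h, h1, h2⟩ := ((hl.eventually (gt_mem_nhds hε)).and (eventually_ge_atTop 1)).exists
  exact ⟨h, by linarith, (key h h2).trans_lt h1⟩

lemma eta_exists {α : ℝ} (hα : 0 < α) (n : ℕ) (hn : 1 ≤ n) : ∃! η : ℝ, 0 < η ∧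
      (n : ℝ) = ∑' k : ℕ, (k : ℝ) * g α k / (Real.exp (η * k) + 1) := by
  have hn' : (0:ℝ) < n := by exact_mod_cast hn
  obtain ⟨u, hu, hun⟩ := NN_zero hα hn'
  obtain ⟨v, hv, hvn⟩ := (((NN_atTop hα).eventually (eventually_ge_atTop (n:ℝ))).and
    self_mem_nhdsWithin).exists
  have hvn : 0 < v := hvn
  obtain ⟨h, hh, hhn⟩ := (isPreconnected_Ioi (a := (0:ℝ))).intermediate_value hu hvn
    (NN_cont hα) ⟨hun.le, hv⟩
  have hh : 0 < h := hh
  refine ⟨h, ⟨hh, by rw [NN_eq hα hh, hhn]⟩, ?_⟩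
  rintro y ⟨hy, hy2⟩
  rw [NN_eq hα hy, ← hhn] at hy2
  rcases lt_trichotomy y h with h' | h' | h'
  · have := NN_anti hα hy h'; linarith
  · exact h'
  · have := NN_anti hα hh h'; linarith

lemma eta_tendsto {α : ℝ} (hα : 0 < α) {η : ℕ → ℝ}
    (hη : ∀ n : ℕ, 1 ≤ n → 0 < η n ∧ (n : ℝ) = NN α (η n)) :
    Tendsto η atTop (nhdsWithin 0 (Set.Ioi 0)) := by
  rw [tendsto_nhdsWithin_iff]
  have hpos : ∀ᶠ n in atTop, 0 < η n := by
    filter_upwards [eventually_ge_atTop 1] with n hn using (hη n hn).1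
  refine ⟨?_, hpos⟩
  rw [Metric.tendsto_atTop]
  intro ε hε
  obtain ⟨M, hM⟩ := exists_nat_gt (NN α ε)
  refine ⟨max M 1, fun n hn => ?_⟩
  obtain ⟨h1, h2⟩ := hη n ((le_max_right _ _).trans hn)
  rw [Real.dist_eq, sub_zero, abs_of_pos h1]
  by_contra hcon
  push Not at hcon
  have hMn : (M:ℝ) ≤ n := by exact_mod_cast (le_max_left _ _).trans hn
  rcases hcon.eq_or_lt with h | h
  · rw [← h] at h2; linarith
  · have := NN_anti hα hε h; linarith


lemma fac_norm {p u x : ℝ} (hp0 : 0 ≤ p) (hp1 : p ≤ 1) (hu : |u| ≤ 1) :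
    ‖1 + (p : ℂ) * (Complex.exp (u + x * Complex.I) - 1)‖
      ≤ Real.exp (p * u + p * u ^ 2) * Real.exp (-(Real.exp (-1) * (p * (1 - p) * (1 - Real.cos x)))) := by
  set m := 1 - p + p * Real.exp u with hm
  have hE := Real.exp_pos u
  have hmpos : 0 < m := by
    rcases hp0.eq_or_lt with h | h
    · rw [hm, ← h]; norm_num
    · have : 0 < p * Real.exp u := by positivity
      rw [hm]; linarith
  have hmle : m ≤ Real.exp (p * u + p * u ^ 2) := by
    have h1 := Real.abs_exp_sub_one_sub_id_le hu
    have h2 : Real.exp u ≤ 1 + u + u ^ 2 := by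
      have := le_abs_self (Real.exp u - 1 - u)
      linarith
    have h3 := Real.add_one_le_exp (p * u + p * u ^ 2)
    have : p * Real.exp u ≤ p * (1 + u + u ^ 2) := by gcongr
    rw [hm]; linarith
  have hcos : 0 ≤ 1 - Real.cos x := by linarith [Real.cos_le_one x]
  have hq : 0 ≤ p * (1 - p) := mul_nonneg hp0 (by linarith)
  have hratio : Real.exp (-1) * m ^ 2 ≤ Real.exp u := by
    rw [abs_le] at hu
    rcases le_total 0 u with h | h
    · have h1 : m ≤ Real.exp u := by
        have : 1 ≤ Real.exp u := Real.one_le_exp h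
        rw [hm]; nlinarith
      calc Real.exp (-1) * m ^ 2 ≤ Real.exp (-u) * (Real.exp u) ^ 2 := by
            gcongr; linarith
        _ = Real.exp u := by rw [← Real.exp_nat_mul, ← Real.exp_add]; congr 1; push_cast; ring
    · have h1 : m ≤ 1 := by
        have : Real.exp u ≤ 1 := Real.exp_le_one_iff.2 h
        rw [hm]; nlinarith
      calc Real.exp (-1) * m ^ 2 ≤ Real.exp u * 1 ^ 2 := by
            gcongr; linarith
        _ = _ := by ring
  have hsq : ‖1 + (p : ℂ) * (Complex.exp (u + x * Complex.I) - 1)‖ ^ 2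
      = m ^ 2 - 2 * (p * (1 - p)) * Real.exp u * (1 - Real.cos x) := by
    rw [← Complex.normSq_eq_norm_sq, Complex.normSq_apply]
    have hr : (1 + (p : ℂ) * (Complex.exp (u + x * Complex.I) - 1)).re
        = 1 + p * (Real.exp u * Real.cos x - 1) := by
      simp [Complex.exp_re]
    have hi : (1 + (p : ℂ) * (Complex.exp (u + x * Complex.I) - 1)).im
        = p * (Real.exp u * Real.sin x) := by
      simp [Complex.exp_im]
    rw [hr, hi, hm]
    have := Real.sin_sq_add_cos_sq x
    linear_combination (p * Real.exp u) ^ 2 * this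
  set k := p * (1 - p) * (1 - Real.cos x) with hk
  have hk0 : 0 ≤ k := mul_nonneg hq hcos
  have hle : ‖1 + (p : ℂ) * (Complex.exp (u + x * Complex.I) - 1)‖ ^ 2
      ≤ (m * Real.exp (-(Real.exp (-1) * k))) ^ 2 := by
    rw [hsq, mul_pow, ← Real.exp_nat_mul]
    have h1 := Real.add_one_le_exp (((2:ℕ):ℝ) * -(Real.exp (-1) * k))
    push_cast at h1 ⊢
    calc m ^ 2 - 2 * (p * (1 - p)) * Real.exp u * (1 - Real.cos x)
        = m ^ 2 - 2 * Real.exp u * k := by rw [hk]; ring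
      _ ≤ m ^ 2 - 2 * (Real.exp (-1) * m ^ 2) * k := by
          have := mul_le_mul_of_nonneg_right hratio hk0
          linarith
      _ = m ^ 2 * (2 * -(Real.exp (-1) * k) + 1) := by ring
      _ ≤ _ := by gcongr
  calc _ ≤ m * Real.exp (-(Real.exp (-1) * k)) :=
        le_of_sq_le_sq' hle (by positivity)
    _ ≤ _ := by gcongr
where
  le_of_sq_le_sq' {a b : ℝ} (h : a ^ 2 ≤ b ^ 2) (hb : 0 ≤ b) : a ≤ b := by
    exact le_of_abs_le ((sq_le_sq₀ (abs_nonneg a) hb).1 (by rwa [sq_abs]))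

lemma exp_i_taylor (y : ℝ) :
    ‖Complex.exp (y * Complex.I) - (1 + y * Complex.I - (y : ℂ) ^ 2 / 2)‖ ≤ 4 * |y| ^ 3 := by
  have hny : ‖(y : ℂ) * Complex.I‖ = |y| := by simp
  rcases le_total |y| 1 with h | h
  · have h1 := Complex.exp_bound (x := (y:ℂ) * Complex.I) (by rw [hny]; exact h) (n := 3) (by norm_num)
    rw [hny] at h1
    have e : ∑ m ∈ Finset.range 3, ((y:ℂ) * Complex.I) ^ m / (m.factorial : ℂ)
        = 1 + y * Complex.I - (y : ℂ) ^ 2 / 2 := by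
      simp [Finset.sum_range_succ, Nat.factorial, mul_pow]
      ring
    rw [e] at h1
    refine h1.trans ?_
    rw [mul_comm]
    gcongr
    norm_num [Nat.factorial]
  · calc ‖Complex.exp (y * Complex.I) - (1 + y * Complex.I - (y : ℂ) ^ 2 / 2)‖
        ≤ ‖Complex.exp (y * Complex.I)‖ + (‖(1:ℂ)‖ + ‖(y:ℂ) * Complex.I‖ + ‖(y : ℂ) ^ 2 / 2‖) := by
          refine (norm_sub_le _ _).trans ?_
          gcongr
          refine (norm_sub_le _ _).trans ?_
          gcongr
          exact norm_add_le _ _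
      _ = 1 + (1 + |y| + |y| ^ 2 / 2) := by
          rw [Complex.norm_exp_ofReal_mul_I, hny]; simp
      _ ≤ _ := by nlinarith [mul_nonneg (sub_nonneg.2 h) (sub_nonneg.2 h), sq_nonneg |y|, pow_le_pow_left₀ zero_le_one h 3, mul_nonneg (sub_nonneg.2 h) (sq_nonneg |y|)]

lemma exp_neg_taylor {y : ℝ} (hy : 0 ≤ y) : |Real.exp (-y) - (1 - y)| ≤ y ^ 2 := by
  rcases le_total y 1 with h | h
  · have := Real.abs_exp_sub_one_sub_id_le (x := -y) (by rw [abs_neg, abs_of_nonneg hy]; exact h)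
    rw [neg_sq] at this
    convert this using 2; ring
  · have h1 := Real.add_one_le_exp (-y)
    have h2 : Real.exp (-y) ≤ 1 := Real.exp_le_one_iff.2 (by linarith)
    rw [abs_of_nonneg (by linarith)]
    nlinarith

lemma fac_eq (p x : ℝ) :
    (1 + (p : ℂ) * (Complex.exp (x * Complex.I) - 1)) * Complex.exp (-((p * x : ℝ) : ℂ) * Complex.I)
      = ((1 - p : ℝ) : ℂ) * Complex.exp (((-p * x : ℝ) : ℂ) * Complex.I)
        + (p : ℂ) * Complex.exp ((((1 - p) * x : ℝ) : ℂ) * Complex.I) := by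
  have : Complex.exp ((((1 - p) * x : ℝ) : ℂ) * Complex.I)
      = Complex.exp (x * Complex.I) * Complex.exp (-((p * x : ℝ) : ℂ) * Complex.I) := by
    rw [← Complex.exp_add]; congr 1; push_cast; ring
  rw [this]
  have h2 : ((-p * x : ℝ) : ℂ) = -((p * x : ℝ) : ℂ) := by push_cast; ring
  rw [h2]; push_cast; ring

lemma fac_norm_one {p x : ℝ} (hp0 : 0 ≤ p) (hp1 : p ≤ 1) :
    ‖(1 + (p : ℂ) * (Complex.exp (x * Complex.I) - 1)) * Complex.exp (-((p * x : ℝ) : ℂ) * Complex.I)‖ ≤ 1 := by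
  rw [fac_eq]
  refine (norm_add_le _ _).trans ?_
  rw [norm_mul, norm_mul, Complex.norm_exp_ofReal_mul_I, Complex.norm_exp_ofReal_mul_I,
    Complex.norm_real, Complex.norm_real, Real.norm_of_nonneg hp0,
    Real.norm_of_nonneg (by linarith)]
  linarith

lemma fac_approx {p x : ℝ} (hp0 : 0 ≤ p) (hp1 : p ≤ 1) :
    ‖(1 + (p : ℂ) * (Complex.exp (x * Complex.I) - 1)) * Complex.exp (-((p * x : ℝ) : ℂ) * Complex.I)
      - ((Real.exp (-(p * (1 - p) * x ^ 2 / 2)) : ℝ) : ℂ)‖ ≤ 4 * (p * |x| ^ 3) + p * x ^ 4 := by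
  rw [fac_eq]
  set v := p * (1 - p) * x ^ 2 / 2 with hv
  have hq0 : 0 ≤ 1 - p := by linarith
  have hv0 : 0 ≤ v := by positivity
  have h1 := exp_i_taylor (-p * x)
  have h2 := exp_i_taylor ((1 - p) * x)
  set e1 := Complex.exp (((-p * x : ℝ) : ℂ) * Complex.I)
  set e2 := Complex.exp ((((1 - p) * x : ℝ) : ℂ) * Complex.I)
  have hid : ((1 - p : ℝ) : ℂ) * e1 + (p : ℂ) * e2 - ((Real.exp (-v) : ℝ) : ℂ)
      = ((1 - p : ℝ) : ℂ) * (e1 - (1 + ((-p * x : ℝ) : ℂ) * Complex.I - ((-p * x : ℝ) : ℂ) ^ 2 / 2))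
        + (p : ℂ) * (e2 - (1 + (((1 - p) * x : ℝ) : ℂ) * Complex.I - (((1 - p) * x : ℝ) : ℂ) ^ 2 / 2))
        - ((Real.exp (-v) - (1 - v) : ℝ) : ℂ) := by
    rw [hv]; push_cast; ring
  rw [hid]
  have h3 := exp_neg_taylor hv0
  calc _ ≤ (1 - p) * (4 * |-p * x| ^ 3) + p * (4 * |(1 - p) * x| ^ 3) + v ^ 2 := by
        refine (norm_sub_le _ _).trans ?_
        refine add_le_add ((norm_add_le _ _).trans (add_le_add ?_ ?_)) ?_
        · rw [norm_mul, Complex.norm_real, Real.norm_of_nonneg hq0]; gcongr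
        · rw [norm_mul, Complex.norm_real, Real.norm_of_nonneg hp0]; gcongr
        · rw [Complex.norm_real]; exact h3
    _ = 4 * (p * |x| ^ 3) * ((1 - p) * (p ^ 2 + (1 - p) ^ 2)) + p * x ^ 4 * (p * (1 - p) ^ 2 / 4) := by
        rw [abs_mul, abs_mul, abs_neg, abs_of_nonneg hp0, abs_of_nonneg hq0, hv]; ring
    _ ≤ 4 * (p * |x| ^ 3) * 1 + p * x ^ 4 * 1 := by
        gcongr
        · have : p ^ 2 + (1 - p) ^ 2 ≤ 1 := by nlinarith
          nlinarith [mul_nonneg hp0 hq0]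
        · nlinarith [mul_nonneg hp0 hq0, mul_nonneg hp0 (mul_nonneg hp0 hq0)]
    _ = _ := by ring

lemma prod_diff (S : Finset ℕ) (f h : ℕ → ℂ) (hf : ∀ a ∈ S, ‖f a‖ ≤ 1) (hh : ∀ a ∈ S, ‖h a‖ ≤ 1) :
    ‖∏ a ∈ S, f a - ∏ a ∈ S, h a‖ ≤ ∑ a ∈ S, ‖f a - h a‖ := by
  induction S using Finset.induction_on with
  | empty => simp
  | insert a S ha ih =>
    rw [Finset.prod_insert ha, Finset.prod_insert ha, Finset.sum_insert ha]
    have i1 := ih (fun x hx => hf x (Finset.mem_insert_of_mem hx))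
      (fun x hx => hh x (Finset.mem_insert_of_mem hx))
    have hP : ‖∏ a ∈ S, h a‖ ≤ 1 := by
      rw [norm_prod]
      exact Finset.prod_le_one (fun _ _ => norm_nonneg _)
        (fun x hx => hh x (Finset.mem_insert_of_mem hx))
    calc ‖f a * ∏ a ∈ S, f a - h a * ∏ a ∈ S, h a‖
        = ‖(f a - h a) * ∏ a ∈ S, h a + f a * (∏ a ∈ S, f a - ∏ a ∈ S, h a)‖ := by
          congr 1; ring
      _ ≤ ‖f a - h a‖ * 1 + 1 * ∑ a ∈ S, ‖f a - h a‖ := by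
          refine (norm_add_le _ _).trans ?_
          rw [norm_mul, norm_mul]
          gcongr
          exact hf a (Finset.mem_insert_self _ _)
      _ = _ := by ring

lemma prod_approx (S : Finset ℕ) (p x : ℕ → ℝ) (hp : ∀ a, 0 ≤ p a ∧ p a ≤ 1) :
    ‖(∏ a ∈ S, (1 + (p a : ℂ) * (Complex.exp (x a * Complex.I) - 1)))
        * Complex.exp (-((∑ a ∈ S, p a * x a : ℝ) : ℂ) * Complex.I)
      - ((Real.exp (-(∑ a ∈ S, p a * (1 - p a) * x a ^ 2) / 2) : ℝ) : ℂ)‖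
      ≤ ∑ a ∈ S, (4 * (p a * |x a| ^ 3) + p a * x a ^ 4) := by
  have e1 : Complex.exp (-((∑ a ∈ S, p a * x a : ℝ) : ℂ) * Complex.I)
      = ∏ a ∈ S, Complex.exp (-((p a * x a : ℝ) : ℂ) * Complex.I) := by
    rw [← Complex.exp_sum]; congr 1
    push_cast
    rw [← Finset.sum_mul, Finset.sum_neg_distrib]
  have e2 : ((Real.exp (-(∑ a ∈ S, p a * (1 - p a) * x a ^ 2) / 2) : ℝ) : ℂ)
      = ∏ a ∈ S, ((Real.exp (-(p a * (1 - p a) * x a ^ 2 / 2)) : ℝ) : ℂ) := by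
    rw [← Complex.ofReal_prod, ← Real.exp_sum]; congr 2
    rw [Finset.sum_neg_distrib, ← Finset.sum_div, neg_div]
  rw [e1, e2, ← Finset.prod_mul_distrib]
  refine (prod_diff S _ _ (fun a _ => fac_norm_one (hp a).1 (hp a).2) (fun a _ => ?_)).trans
    (Finset.sum_le_sum fun a _ => fac_approx (hp a).1 (hp a).2)
  rw [Complex.norm_real, Real.norm_of_nonneg (Real.exp_pos _).le]
  apply Real.exp_le_one_iff.2
  have : 0 ≤ p a * (1 - p a) * x a ^ 2 / 2 := by
    have := mul_nonneg (hp a).1 (sub_nonneg.2 (hp a).2); positivity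
  linarith

lemma orth (m : ℤ) : ∫ t in (-π)..π, Complex.exp ((m : ℂ) * Complex.I * t)
    = if m = 0 then (2 * π : ℂ) else 0 := by
  split_ifs with h
  · simp [h]; ring
  · have hc : (m : ℂ) * Complex.I ≠ 0 := by simp [h]
    rw [integral_exp_mul_complex hc]
    have : Complex.exp ((m:ℂ) * Complex.I * (π : ℝ)) = Complex.exp ((m:ℂ) * Complex.I * ((-π : ℝ) : ℂ)) := by
      rw [Complex.exp_eq_exp_iff_exists_int]
      exact ⟨m, by push_cast; ring⟩
    rw [this]; simp

/-- the generating product -/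
noncomputable def Phi (α h : ℝ) (S : Finset ℕ) (z : ℂ) (t : ℝ) : ℂ :=
  ∏ a ∈ S, (1 + (ff (h * bb α a) : ℂ) * (Complex.exp (z + ((t * bb α a : ℝ) : ℂ) * Complex.I) - 1))

noncomputable def PP (α : ℝ) (S : Finset ℕ) (n : ℕ) : Finset (Finset ℕ) :=
  S.powerset.filter (fun A => ∑ a ∈ A, bb α a = n)

noncomputable def WW (α h : ℝ) (S : Finset ℕ) (n : ℕ) : ℝ :=
  (∏ a ∈ S, (1 - ff (h * bb α a))) * Real.exp (-(h * n))

lemma WW_pos (α h : ℝ) (S : Finset ℕ) (n : ℕ) : 0 < WW α h S n :=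
  mul_pos (Finset.prod_pos fun a _ => sub_pos.2 (ff_lt_one _)) (Real.exp_pos _)

lemma Phi_expand (α h : ℝ) (S : Finset ℕ) (z : ℂ) (t : ℝ) :
    Phi α h S z t = ∑ A ∈ S.powerset, (((∏ a ∈ S, (1 - ff (h * bb α a)))
      * Real.exp (-(h * (∑ a ∈ A, bb α a : ℕ))) : ℝ) : ℂ) * Complex.exp (z * (A.card : ℕ))
        * Complex.exp (((∑ a ∈ A, bb α a : ℕ) : ℂ) * Complex.I * t) := by
  have h1 : ∀ a, (1 + (ff (h * bb α a) : ℂ) * (Complex.exp (z + ((t * bb α a : ℝ) : ℂ) * Complex.I) - 1))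
      = ((1 - ff (h * bb α a) : ℝ) : ℂ) * (1 + Complex.exp (-(h * bb α a : ℝ) + z + ((t * bb α a : ℝ) : ℂ) * Complex.I)) := by
    intro a
    have : ff (h * bb α a) = (1 - ff (h * bb α a)) * Real.exp (-(h * bb α a)) := by
      unfold ff; rw [Real.exp_neg]; have := Real.exp_pos (h * bb α a); field_simp; ring
    have h2 : (ff (h * bb α a) : ℂ) = ((1 - ff (h * bb α a) : ℝ) : ℂ) * Complex.exp (-(h * bb α a : ℝ)) := by
      conv_lhs => rw [this]
      rw [Complex.ofReal_mul, Complex.ofReal_exp]; push_cast; rfl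
    rw [add_assoc (-((h * bb α a : ℝ) : ℂ)), Complex.exp_add (-((h * bb α a : ℝ) : ℂ))]
    have h3 : ((1 - ff (h * bb α a) : ℝ) : ℂ) = 1 - (ff (h * bb α a) : ℂ) := by push_cast; rfl
    linear_combination (Complex.exp (z + ((t * bb α a : ℝ) : ℂ) * Complex.I)) * h2 - h3
  unfold Phi
  rw [Finset.prod_congr rfl fun a _ => h1 a, Finset.prod_mul_distrib, Finset.prod_one_add,
    Finset.mul_sum]
  refine Finset.sum_congr rfl fun A _ => ?_
  rw [← Complex.exp_sum, Complex.ofReal_mul, Complex.ofReal_exp, mul_assoc, mul_assoc,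
    ← Complex.exp_add, ← Complex.exp_add, Complex.ofReal_prod]
  congr 2
  push_cast
  rw [Finset.sum_add_distrib, Finset.sum_add_distrib, Finset.sum_const, Finset.mul_sum,
    Finset.sum_mul, Finset.sum_mul, Finset.sum_neg_distrib, add_assoc]
  congr 2
  · rw [nsmul_eq_mul, mul_comm]
  · refine Finset.sum_congr rfl fun a _ => by ring

lemma Phi_integral (α h : ℝ) (S : Finset ℕ) (n : ℕ) (z : ℂ) :
    ∫ t in (-π)..π, Phi α h S z t * Complex.exp (-(n * t : ℝ) * Complex.I)
      = 2 * π * (WW α h S n : ℂ) * ∑ A ∈ PP α S n, Complex.exp (z * (A.card : ℕ)) := by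
  have h1 : ∀ t : ℝ, Phi α h S z t * Complex.exp (-(n * t : ℝ) * Complex.I)
      = ∑ A ∈ S.powerset, ((((∏ a ∈ S, (1 - ff (h * bb α a)))
      * Real.exp (-(h * (∑ a ∈ A, bb α a : ℕ))) : ℝ) : ℂ) * Complex.exp (z * (A.card : ℕ)))
        * Complex.exp ((((∑ a ∈ A, bb α a : ℕ) - n : ℤ) : ℂ) * Complex.I * t) := by
    intro t
    rw [Phi_expand, Finset.sum_mul]
    refine Finset.sum_congr rfl fun A _ => ?_
    rw [mul_assoc, ← Complex.exp_add]
    congr 2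
    push_cast; ring
  simp_rw [h1]
  rw [intervalIntegral.integral_finset_sum]
  · simp_rw [intervalIntegral.integral_const_mul, orth]
    unfold PP
    rw [Finset.sum_filter, Finset.mul_sum]
    refine Finset.sum_congr rfl fun A _ => ?_
    by_cases hA : ∑ a ∈ A, bb α a = n
    · rw [if_pos (by omega), if_pos hA, hA]
      unfold WW; ring
    · rw [if_neg (by omega), if_neg hA]; simp
  · intro A _
    apply Continuous.intervalIntegrable
    fun_prop

lemma mem_PP {α : ℝ} {S : Finset ℕ} {n : ℕ} (hS : ∀ a, bb α a ≤ n → a ∈ S) (A : Finset ℕ) :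
    A ∈ PP α S n ↔ ∑ a ∈ A, bb α a = n := by
  unfold PP
  rw [Finset.mem_filter, Finset.mem_powerset]
  refine ⟨fun h => h.2, fun h => ⟨fun a ha => hS a ?_, h⟩⟩
  rw [← h]
  exact Finset.single_le_sum (f := bb α) (fun _ _ => Nat.zero_le _) ha

/-- restricted partitions as images of index sets -/
lemma part_set (α : ℝ) (n : ℕ) (Q : ℕ → Prop) :
    {A : Finset ℕ | (∀ a ∈ A, 1 ≤ a) ∧ Q A.card ∧ (∑ a ∈ A, ⌊(a : ℝ) ^ α⌋) = (n : ℤ)}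
    = (fun A : Finset ℕ => A.map ⟨Nat.succ, Nat.succ_injective⟩) ''
        {A : Finset ℕ | Q A.card ∧ ∑ a ∈ A, bb α a = n} := by
  have key : ∀ A : Finset ℕ, ∑ a ∈ A.map ⟨Nat.succ, Nat.succ_injective⟩, ⌊(a : ℝ) ^ α⌋
      = ((∑ a ∈ A, bb α a : ℕ) : ℤ) := by
    intro A
    rw [Finset.sum_map]; push_cast
    refine Finset.sum_congr rfl fun a _ => ?_
    unfold bb
    have := Int.natCast_floor_eq_floor (a := ((a:ℝ) + 1)^α) (by positivity)
    rw [this]; simp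
  ext A
  simp only [Set.mem_ofPred_eq, Set.mem_image]
  constructor
  · rintro ⟨h1, h2, h3⟩
    have hA : (A.image Nat.pred).map ⟨Nat.succ, Nat.succ_injective⟩ = A := by
      ext x
      simp only [Finset.mem_map, Finset.mem_image, Function.Embedding.coeFn_mk]
      constructor
      · rintro ⟨y, ⟨w, hw, rfl⟩, rfl⟩
        have := h1 w hw
        rwa [Nat.succ_pred_eq_of_pos this]
      · intro hx
        exact ⟨x.pred, ⟨x, hx, rfl⟩, Nat.succ_pred_eq_of_pos (h1 x hx)⟩
    refine ⟨A.image Nat.pred, ⟨?_, ?_⟩, hA⟩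
    · rw [← Finset.card_map ⟨Nat.succ, Nat.succ_injective⟩, hA]; exact h2
    · have := key (A.image Nat.pred)
      rw [hA, h3] at this
      exact_mod_cast this.symm
  · rintro ⟨A, ⟨h1, h2⟩, rfl⟩
    refine ⟨?_, by rwa [Finset.card_map], by rw [key, h2]⟩
    intro a ha
    simp only [Finset.mem_map, Function.Embedding.coeFn_mk] at ha
    obtain ⟨y, _, rfl⟩ := ha
    omega

lemma qnm_eq {α : ℝ} {S : Finset ℕ} {n : ℕ} (hS : ∀ a, bb α a ≤ n → a ∈ S) (m : ℕ) :
    qnm α n m = ((PP α S n).filter (fun A => A.card = m)).card := by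
  unfold qnm
  rw [part_set α n (fun c => c = m), Set.ncard_image_of_injective _ (Finset.map_injective _),
    ← Set.ncard_coe_finset]
  congr 1
  ext A
  simp [mem_PP hS, and_comm]

lemma qn_eq {α : ℝ} {S : Finset ℕ} {n : ℕ} (hS : ∀ a, bb α a ≤ n → a ∈ S) :
    qn α n = (PP α S n).card := by
  unfold qn
  have := part_set α n (fun _ => True)
  simp only [true_and] at this
  rw [this, Set.ncard_image_of_injective _ (Finset.map_injective _), ← Set.ncard_coe_finset]
  congr 1
  ext A
  simp [mem_PP hS]

lemma tsum_qnm {α : ℝ} {S : Finset ℕ} {n : ℕ} (hS : ∀ a, bb α a ≤ n → a ∈ S) (F : ℕ → ℝ) :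
    ∑' m : ℕ, F m * qnm α n m = ∑ A ∈ PP α S n, F A.card := by
  have h1 : ∀ m, F m * qnm α n m = ∑ A ∈ (PP α S n).filter (fun A => A.card = m), F A.card := by
    intro m
    rw [qnm_eq hS, Finset.sum_congr rfl (g := fun _ => F m)]
    · rw [Finset.sum_const, nsmul_eq_mul, mul_comm]
    · intro A hA
      rw [(Finset.mem_filter.1 hA).2]
  simp_rw [h1]
  rw [tsum_eq_sum (s := (PP α S n).image Finset.card)]
  · exact Finset.sum_fiberwise_of_maps_to (fun A hA => Finset.mem_image_of_mem _ hA) _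
  · intro m hm
    apply Finset.sum_eq_zero
    intro A hA
    rw [Finset.mem_filter] at hA
    exact absurd (Finset.mem_image.2 ⟨A, hA⟩) hm


lemma Phi_norm (α h : ℝ) (S : Finset ℕ) {u θ : ℝ} (t : ℝ) (hu : |u| ≤ 1) :
    ‖Phi α h S (u + θ * Complex.I) t‖ ≤ Real.exp ((u + u ^ 2) * ∑ a ∈ S, ff (h * bb α a))
      * Real.exp (-(Real.exp (-1) * ∑ a ∈ S, ww (h * bb α a) * (1 - Real.cos (θ + t * bb α a)))) := by
  unfold Phi
  rw [norm_prod, Finset.mul_sum, Finset.mul_sum, ← Finset.sum_neg_distrib, Real.exp_sum, Real.exp_sum,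
    ← Finset.prod_mul_distrib]
  refine Finset.prod_le_prod (fun _ _ => norm_nonneg _) fun a _ => ?_
  have := fac_norm (ff_pos (h * bb α a)).le (ff_lt_one (h * bb α a)).le hu (x := θ + t * bb α a)
  rw [← ww_eq] at this
  have e1 : (u : ℂ) + θ * Complex.I + ((t * bb α a : ℝ) : ℂ) * Complex.I
      = u + ((θ + t * bb α a : ℝ) : ℂ) * Complex.I := by push_cast; ring
  have e2 : (u + u ^ 2) * ff (h * bb α a) = ff (h * bb α a) * u + ff (h * bb α a) * u ^ 2 := by ring
  rw [e1, e2]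
  exact this

/-- cut-off -/
noncomputable def cut (x : ℝ) : ℝ := max 0 (1 - 8 * x)

lemma cut_cont : Continuous cut := by unfold cut; fun_prop
lemma cut_nonneg (x : ℝ) : 0 ≤ cut x := le_max_left _ _
lemma cut_le_one {x : ℝ} (hx : 0 ≤ x) : cut x ≤ 1 := max_le zero_le_one (by linarith)
lemma expB_cut (j : ℕ) : ExpB (fun x => x ^ j * (ww x * cut x)) := by
  refine expB_pow (fun x hx => ?_) j
  rw [abs_of_nonneg (mul_nonneg (ww_pos x).le (cut_nonneg x))]
  calc ww x * cut x ≤ ww x * 1 := by gcongr; exacts [(ww_pos x).le, cut_le_one hx]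
    _ ≤ _ := by rw [mul_one]; exact ww_le x
lemma cont_cut (j : ℕ) : Continuous (fun x => x ^ j * (ww x * cut x)) :=
  (continuous_pow j).mul (ww_cont.mul cut_cont)

lemma dom_small {α h θ t : ℝ} (hh : 0 < h) {n : ℕ} {S : Finset ℕ}
    (hS : ∀ a, bb α a ≤ n → a ∈ S) (hn : 1 / h ≤ n) (hθ : |θ| ≤ 1) (ht : |t| ≤ 4 * π * h) :
    2 / π ^ 2 * ((t ^ 2 / 2) * (h ^ 2)⁻¹ * TT α (fun x => x ^ 2 * (ww x * cut x)) h
      - θ ^ 2 * TT α (fun x => x ^ 0 * (ww x * cut x)) h)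
      ≤ ∑ a ∈ S, ww (h * bb α a) * (1 - Real.cos (θ + t * bb α a)) := by
  have hout : ∀ a, a ∉ S → cut (h * bb α a) = 0 := by
    intro a ha
    have h1 : n < bb α a := by
      by_contra hcon
      exact ha (hS a (by omega))
    have h2 : (n:ℝ) < bb α a := by exact_mod_cast h1
    have h3 : 1 < h * bb α a := by
      have : 1 / h < bb α a := by linarith
      rw [div_lt_iff₀ hh] at this; linarith
    exact max_eq_left (by linarith)
  have e2 : TT α (fun x => x ^ 2 * (ww x * cut x)) h
      = ∑ a ∈ S, (h * bb α a) ^ 2 * (ww (h * bb α a) * cut (h * bb α a)) :=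
    tsum_eq_sum fun a ha => by simp [hout a ha]
  have e0 : TT α (fun x => x ^ 0 * (ww x * cut x)) h
      = ∑ a ∈ S, (h * bb α a) ^ 0 * (ww (h * bb α a) * cut (h * bb α a)) :=
    tsum_eq_sum fun a ha => by simp [hout a ha]
  rw [e2, e0, Finset.mul_sum, Finset.mul_sum, ← Finset.sum_sub_distrib, Finset.mul_sum]
  refine Finset.sum_le_sum fun a _ => ?_
  set b : ℝ := (bb α a : ℝ) with hb
  have hb0 : 0 ≤ b := Nat.cast_nonneg _
  have hw := ww_pos (h * b)
  have hc0 := cut_nonneg (h * b)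
  have hcos : 0 ≤ 1 - Real.cos (θ + t * b) := by linarith [Real.cos_le_one (θ + t * b)]
  rcases hc0.eq_or_lt with hc | hc
  · rw [← hc]; simp; positivity
  · have hlt : 8 * (h * b) < 1 := by
      by_contra hcon
      push Not at hcon
      have : cut (h * b) = 0 := max_eq_left (by linarith)
      linarith
    have habs : |θ + t * b| ≤ π := by
      have h1 : |t * b| ≤ π / 2 := by
        rw [abs_mul, abs_of_nonneg hb0]
        calc |t| * b ≤ 4 * π * h * b := by gcongr
          _ = π / 2 * (8 * (h * b)) := by ring
          _ ≤ π / 2 * 1 := by gcongr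
          _ = _ := by ring
      have := abs_add_le θ (t * b)
      linarith [Real.two_le_pi]
    have hq := Real.cos_le_one_sub_mul_cos_sq habs
    have hc1 := cut_le_one (x := h * b) (by positivity)
    have hsq : t ^ 2 * b ^ 2 / 2 - θ ^ 2 ≤ (θ + t * b) ^ 2 := by
      nlinarith [sq_nonneg (2 * θ + t * b)]
    calc 2 / π ^ 2 * (t ^ 2 / 2 * (h ^ 2)⁻¹ * ((h * b) ^ 2 * (ww (h * b) * cut (h * b)))
          - θ ^ 2 * ((h * b) ^ 0 * (ww (h * b) * cut (h * b))))
        = 2 / π ^ 2 * (t ^ 2 * b ^ 2 / 2 - θ ^ 2) * (ww (h * b) * cut (h * b)) := by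
          field_simp
      _ ≤ 2 / π ^ 2 * (θ + t * b) ^ 2 * (ww (h * b) * cut (h * b)) := by gcongr
      _ ≤ (1 - Real.cos (θ + t * b)) * (ww (h * b) * cut (h * b)) := by
          gcongr; linarith
      _ ≤ (1 - Real.cos (θ + t * b)) * (ww (h * b) * 1) := by gcongr
      _ = _ := by ring

lemma dirichlet (θ t : ℝ) (K : ℕ) :
    |2 * Real.sin (t / 2) * ∑ k ∈ Finset.range K, Real.cos (θ + t * (k + 1))| ≤ 2 := by
  have h1 : 2 * Real.sin (t / 2) * ∑ k ∈ Finset.range K, Real.cos (θ + t * (k + 1))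
      = Real.sin (θ + t * (K + 1/2)) - Real.sin (θ + t * (1/2)) := by
    induction K with
    | zero => simp
    | succ K ih =>
      rw [Finset.sum_range_succ, mul_add, ih]
      have e1 : θ + t * ((K + 1 : ℕ) + 1/2) = (θ + t * (K + 1)) + t / 2 := by push_cast; ring
      have e2 : θ + t * (K + 1/2) = (θ + t * (K + 1)) - t / 2 := by ring
      rw [e1, e2, Real.sin_add (θ + t * (K + 1)), Real.sin_sub (θ + t * (K + 1))]; ring
  rw [h1, abs_le]
  constructor <;> linarith [Real.sin_le_one (θ + t * (K + 1/2)), Real.neg_one_le_sin (θ + t * (K + 1/2)),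
    Real.sin_le_one (θ + t * (1/2)), Real.neg_one_le_sin (θ + t * (1/2))]

lemma ww_ge {x : ℝ} (h0 : 0 ≤ x) (h1 : x ≤ 1) : 1 / 16 ≤ ww x := by
  have e1 : 1 ≤ Real.exp x := Real.one_le_exp h0
  have e2 : Real.exp x ≤ 3 := (Real.exp_le_exp.2 h1).trans (by linarith [Real.exp_one_lt_d9])
  unfold ww
  rw [div_le_div_iff₀ (by norm_num) (by positivity)]
  nlinarith

lemma dom_large {α h θ t : ℝ} (hα : 0 < α) (hα1 : α < 1) (hh : 0 < h) (hh1 : h ≤ 1 / 2) {n : ℕ}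
    {S : Finset ℕ}
    (hS : ∀ a, bb α a ≤ n → a ∈ S) (hn : 1 / h ≤ n) (ht : 4 * π * h ≤ |t|) (htπ : |t| ≤ π) :
    1 / (64 * h) ≤ ∑ a ∈ S, ww (h * bb α a) * (1 - Real.cos (θ + t * bb α a)) := by
  choose c hc using fun k : ℕ => bb_surj hα hα1 (k + 1) (by omega)
  have hcinj : Function.Injective c := by
    intro i j hij
    have h1 := hc i
    rw [hij, hc j] at h1
    omega
  set K := ⌊1 / h⌋₊ with hK
  have hK1 : (K : ℝ) ≤ 1 / h := Nat.floor_le (by positivity)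
  have hK2 : 1 / (2 * h) ≤ K := by
    have h1 := Nat.lt_floor_add_one (1 / h)
    have h2 : 1 / h = 1 / (2 * h) + 1 / (2 * h) := by field_simp; norm_num
    have h3 : 1 ≤ 1 / (2 * h) := by rw [le_div_iff₀ (by positivity)]; linarith
    rw [← hK] at h1
    linarith
  have hsub : (Finset.range K).map ⟨c, hcinj⟩ ⊆ S := by
    intro a ha
    simp only [Finset.mem_map, Finset.mem_range, Function.Embedding.coeFn_mk] at ha
    obtain ⟨k, hk, rfl⟩ := ha
    apply hS
    rw [hc]
    have : (K : ℝ) ≤ n := hK1.trans hn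
    have : K ≤ n := by exact_mod_cast this
    omega
  have hnn : ∀ a, 0 ≤ ww (h * bb α a) * (1 - Real.cos (θ + t * bb α a)) := fun a =>
    mul_nonneg (ww_pos _).le (by linarith [Real.cos_le_one (θ + t * bb α a)])
  refine le_trans ?_ (Finset.sum_le_sum_of_subset_of_nonneg hsub fun a _ _ => hnn a)
  rw [Finset.sum_map]
  simp only [Function.Embedding.coeFn_mk, hc]
  have hcossum : ∑ k ∈ Finset.range K, Real.cos (θ + t * (k + 1)) ≤ 1 / (4 * h) := by
    have h1 := dirichlet θ t K
    rw [abs_mul, abs_mul, abs_of_pos (by norm_num : (0:ℝ) < 2)] at h1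
    have hs : |t| / π ≤ |Real.sin (t / 2)| := by
      have := Real.mul_abs_le_abs_sin (x := t / 2) (by rw [abs_div, abs_two]; linarith)
      refine le_trans (le_of_eq ?_) this
      rw [abs_div, abs_two]; field_simp
    have hs2 : 4 * h ≤ |Real.sin (t / 2)| := by
      refine le_trans ?_ hs
      rw [le_div_iff₀ Real.pi_pos]; linarith
    have h2 : |∑ k ∈ Finset.range K, Real.cos (θ + t * (k + 1))| * (4 * h) ≤ 1 := by
      nlinarith [abs_nonneg (∑ k ∈ Finset.range K, Real.cos (θ + t * (k + 1)))]
    rw [le_div_iff₀ (by positivity)]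
    refine le_trans ?_ h2
    gcongr
    exact le_abs_self _
  calc 1 / (64 * h) = 1 / 16 * (1 / (2 * h) - 1 / (4 * h)) := by field_simp; norm_num
    _ ≤ 1 / 16 * (K - ∑ k ∈ Finset.range K, Real.cos (θ + t * (k + 1))) := by
        gcongr
    _ = ∑ k ∈ Finset.range K, 1 / 16 * (1 - Real.cos (θ + t * (k + 1))) := by
        rw [← Finset.mul_sum, Finset.sum_sub_distrib]; simp
    _ ≤ _ := by
        refine Finset.sum_le_sum fun k hk => ?_
        have hk' : (k:ℝ) + 1 ≤ K := by
          have := Finset.mem_range.1 hk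
          exact_mod_cast this
        have hcos : 0 ≤ 1 - Real.cos (θ + t * (k + 1)) := by
          linarith [Real.cos_le_one (θ + t * (k + 1))]
        push_cast
        gcongr
        apply ww_ge (by positivity)
        have : (k:ℝ) + 1 ≤ 1 / h := hk'.trans hK1
        rw [le_div_iff₀ hh] at this; linarith

/-- good truncation sets -/
structure Good (α h : ℝ) (n : ℕ) (S : Finset ℕ) : Prop where
  mem : ∀ a, bb α a ≤ n → a ∈ S
  tail : ∀ F : ℕ → ℝ, (∀ a, 0 ≤ F a) → (∀ a, F a ≤ (bb α a : ℝ) ^ 2 * ff (h * bb α a)) →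
    Summable F ∧ ∑ a ∈ S, F a ≤ ∑' a, F a ∧ ∑' a, F a ≤ ∑ a ∈ S, F a + 1

lemma exists_good {α h : ℝ} (hα : 0 < α) (hh : 0 < h) (n : ℕ) : ∃ S, Good α h n S := by
  have hs : Summable (fun a => (bb α a : ℝ) ^ 2 * ff (h * bb α a)) := by
    refine ((summ_H hα hh (expB_ff 2)).mul_left (h ^ 2)⁻¹).congr fun a => ?_
    field_simp
  have hfin : {a | bb α a ≤ n}.Finite := by
    have h0 : Summable (fun a => (h * bb α a) ^ 0 * ff (h * bb α a)) := summ_H hα hh (expB_ff 0)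
    have h1 := h0.tendsto_cofinite_zero.eventually (gt_mem_nhds (ff_pos (h * n)))
    rw [Filter.eventually_cofinite] at h1
    refine h1.subset fun a ha => ?_
    have ha : bb α a ≤ n := ha
    have hb : (bb α a : ℝ) ≤ n := by exact_mod_cast ha
    simp only [Set.mem_ofPred_eq, pow_zero, one_mul, not_lt]
    rcases hb.eq_or_lt with e | e
    · rw [e]
    · exact (ff_anti (mul_lt_mul_of_pos_left e hh)).le
  have h2 := hs.hasSum.eventually (lt_mem_nhds
    (sub_one_lt (∑' a, (bb α a : ℝ) ^ 2 * ff (h * bb α a))))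
  obtain ⟨S, hS1, hS2⟩ := (h2.and (eventually_ge_atTop hfin.toFinset)).exists
  refine ⟨S, fun a ha => hS2 (hfin.mem_toFinset.2 ha), fun F hF0 hF => ?_⟩
  have hsF : Summable F := Summable.of_nonneg_of_le hF0 hF hs
  refine ⟨hsF, hsF.sum_le_tsum S fun a _ => hF0 a, ?_⟩
  have h3 := (hs.sub hsF).sum_le_tsum S fun a _ => sub_nonneg.2 (hF a)
  rw [hs.tsum_sub hsF, Finset.sum_sub_distrib] at h3
  linarith


noncomputable def muh (α h : ℝ) : ℝ := TT α (fun x => x ^ 0 * ff x) h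
noncomputable def TW (α : ℝ) (j : ℕ) (h : ℝ) : ℝ := TT α (fun x => x ^ j * ww x) h
noncomputable def sg2 (α h : ℝ) : ℝ := TW α 0 h - TW α 1 h ^ 2 / TW α 2 h
noncomputable def sg (α h : ℝ) : ℝ := Real.sqrt (sg2 α h)
noncomputable def BB (α h : ℝ) : ℝ := Real.sqrt (TW α 2 h) / h

/-- the filter of small positive numbers -/
abbrev F0 : Filter ℝ := nhdsWithin 0 (Set.Ioi 0)

lemma F0_pos : ∀ᶠ h in F0, 0 < h := self_mem_nhdsWithin
lemma F0_lt {c : ℝ} (hc : 0 < c) : ∀ᶠ h in F0, h < c := nhdsWithin_le_nhds (gt_mem_nhds hc)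

lemma ratio_lim {α : ℝ} {f k : ℝ → ℝ} {A B : ℝ}
    (h1 : Tendsto (fun h : ℝ => h ^ (1/α) * f h) F0 (nhds A))
    (h2 : Tendsto (fun h : ℝ => h ^ (1/α) * k h) F0 (nhds B)) (hB : 0 < B) :
    Tendsto (fun h => f h / k h) F0 (nhds (A / B)) := by
  refine (h1.div h2 hB.ne').congr' ?_
  filter_upwards [F0_pos] with h hh
  have : h ^ (1/α) ≠ 0 := (Real.rpow_pos_of_pos hh _).ne'
  simp only [Pi.div_apply]
  rw [mul_div_mul_left _ _ this]

lemma F0_rpow_inv {c : ℝ} (hc : 0 < c) : Tendsto (fun h : ℝ => (h ^ c)⁻¹) F0 atTop := by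
  apply Tendsto.inv_tendsto_nhdsGT_zero
  rw [tendsto_nhdsWithin_iff]
  constructor
  · have hid : Tendsto (fun h : ℝ => h) F0 (nhds 0) :=
      tendsto_nhdsWithin_of_tendsto_nhds tendsto_id
    have := hid.rpow_const (p := c) (Or.inr hc.le)
    rwa [Real.zero_rpow hc.ne'] at this
  · filter_upwards [F0_pos] with h hh
    exact Real.rpow_pos_of_pos hh _

lemma atTop_lim {α : ℝ} (hα : 0 < α) {f : ℝ → ℝ} {A : ℝ}
    (h1 : Tendsto (fun h : ℝ => h ^ (1/α) * f h) F0 (nhds A)) (hA : 0 < A) :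
    Tendsto f F0 atTop := by
  refine ((F0_rpow_inv (c := 1/α) (by positivity)).atTop_mul_pos hA h1).congr' ?_
  filter_upwards [F0_pos] with h hh
  have : h ^ (1/α) ≠ 0 := (Real.rpow_pos_of_pos hh _).ne'
  field_simp

lemma TW_lim {α : ℝ} (hα : 0 < α) (j : ℕ) :
    Tendsto (fun h : ℝ => h ^ (1/α) * TW α j h) F0 (nhds (II α (fun x => x ^ j * ww x))) :=
  TT_tendsto hα (expB_ww j) (cont_ww j)

lemma TF_lim {α : ℝ} (hα : 0 < α) (j : ℕ) :
    Tendsto (fun h : ℝ => h ^ (1/α) * TT α (fun x => x ^ j * ff x) h) F0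
      (nhds (II α (fun x => x ^ j * ff x))) :=
  TT_tendsto hα (expB_ff j) (cont_ff j)

lemma sg2_lim {α : ℝ} (hα : 0 < α) :
    Tendsto (fun h : ℝ => h ^ (1/α) * sg2 α h) F0 (nhds (tau α)) := by
  have h2 := II_ww_pos hα 2
  refine ((TW_lim hα 0).sub (((TW_lim hα 1).pow 2).div (TW_lim hα 2) h2.ne')).congr' ?_
  filter_upwards [F0_pos] with h hh
  have : h ^ (1/α) ≠ 0 := (Real.rpow_pos_of_pos hh _).ne'
  simp only [Pi.div_apply]
  unfold sg2
  rw [mul_sub]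
  congr 1
  rw [mul_pow, sq, mul_assoc, mul_div_mul_left _ _ this]
  ring

lemma sg_atTop {α : ℝ} (hα : 0 < α) : Tendsto (sg α) F0 atTop :=
  Real.tendsto_sqrt_atTop.comp (atTop_lim hα (sg2_lim hα) (tau_pos hα))

lemma sg_sq {α : ℝ} (hα : 0 < α) : ∀ᶠ h in F0, sg α h ^ 2 = sg2 α h ∧ 0 < sg α h := by
  filter_upwards [(atTop_lim hα (sg2_lim hα) (tau_pos hα)).eventually (eventually_gt_atTop 0)]
    with h hh
  exact ⟨Real.sq_sqrt hh.le, Real.sqrt_pos.2 hh⟩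

lemma TW2_sqrt {α : ℝ} (hα : 0 < α) : Tendsto (fun h => Real.sqrt (TW α 2 h)) F0 atTop :=
  Real.tendsto_sqrt_atTop.comp (atTop_lim hα (TW_lim hα 2) (II_ww_pos hα 2))

lemma BB_atTop {α : ℝ} (hα : 0 < α) : Tendsto (BB α) F0 atTop := by
  refine tendsto_atTop_mono' F0 ?_ (TW2_sqrt hα)
  filter_upwards [F0_pos, F0_lt one_pos] with h hh hh1
  unfold BB
  rw [le_div_iff₀ hh]
  nlinarith [Real.sqrt_nonneg (TW α 2 h)]

lemma BB_sq {α h : ℝ} (hh : 0 < h) (hT : 0 < TW α 2 h) : BB α h ^ 2 = (h ^ 2)⁻¹ * TW α 2 h := by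
  unfold BB
  rw [div_pow, Real.sq_sqrt hT.le]; field_simp

lemma BB_exp {α : ℝ} (hα : 0 < α) {c : ℝ} (hc : 0 < c) :
    Tendsto (fun h => (1 + π ^ 2 * BB α h ^ 2) * Real.exp (-(c / h))) F0 (nhds 0) := by
  have hinv : Tendsto (fun h : ℝ => h⁻¹) F0 atTop := tendsto_inv_nhdsGT_zero
  have e0 : Tendsto (fun h : ℝ => Real.exp (-(c / h))) F0 (nhds 0) := by
    refine Real.tendsto_exp_neg_atTop_nhds_zero.comp ?_
    exact (hinv.const_mul_atTop hc)
  have e1 : Tendsto (fun h : ℝ => (h⁻¹) ^ (2 + 1/α) * Real.exp (-c * h⁻¹)) F0 (nhds 0) :=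
    (tendsto_rpow_mul_exp_neg_mul_atTop_nhds_zero (2 + 1/α) c hc).comp hinv
  have e2 := e0.add (((TW_lim hα 2).mul e1).const_mul (π ^ 2))
  simp only [mul_zero, add_zero] at e2
  refine e2.congr' ?_
  filter_upwards [F0_pos, (atTop_lim hα (TW_lim hα 2) (II_ww_pos hα 2)).eventually
    (eventually_gt_atTop 0)] with h hh hT
  rw [BB_sq hh hT, Real.inv_rpow hh.le, Real.rpow_add hh]
  have h1 : h ^ (1/α) ≠ 0 := (Real.rpow_pos_of_pos hh _).ne'
  have h2 : -c * h⁻¹ = -(c / h) := by field_simp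
  have h3 : h ^ (2:ℝ) = h ^ 2 := by exact_mod_cast Real.rpow_natCast h 2
  rw [h2, h3]
  field_simp

/-- the data of the saddle point analysis -/
structure Sys (α : ℝ) (η : ℕ → ℝ) (S : ℕ → Finset ℕ) : Prop where
  pos : 0 < α
  lt_one : α < 1
  tend : Tendsto η atTop F0
  eq : ∀ n : ℕ, 1 ≤ n → (n : ℝ) = NN α (η n)
  good : ∀ n : ℕ, 1 ≤ n → Good α (η n) n (S n)

lemma Sys.inv_le {α : ℝ} {η : ℕ → ℝ} {S : ℕ → Finset ℕ} (H : Sys α η S) :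
    ∀ᶠ n : ℕ in atTop, 1 / η n ≤ n := by
  have h1 := (atTop_lim H.pos (TF_lim H.pos 1) (II_ff_pos H.pos 1)).comp H.tend
  filter_upwards [eventually_ge_atTop 1, H.tend.eventually F0_pos,
    h1.eventually (eventually_ge_atTop 1)] with n hn hpos h2
  rw [H.eq n hn]
  unfold NN
  rw [one_div]
  simp only [Function.comp] at h2
  exact le_mul_of_one_le_right (inv_pos.2 hpos).le h2

/-- sum tail in scaled variables -/
lemma Good.tail' {α h : ℝ} {n : ℕ} {S : Finset ℕ} (G : Good α h n S) (hα : 0 < α) (hh : 0 < h)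
    (hh1 : h ≤ 1)
    {j : ℕ} (hj : j ≤ 2) {G0 : ℝ → ℝ} (h0 : ∀ x, 0 ≤ G0 x) (h1 : ∀ x, G0 x ≤ ff x) :
    ∑ a ∈ S, (h * bb α a) ^ j * G0 (h * bb α a) ≤ TT α (fun x => x ^ j * G0 x) h ∧
    TT α (fun x => x ^ j * G0 x) h ≤ ∑ a ∈ S, (h * bb α a) ^ j * G0 (h * bb α a) + 1 := by
  refine (G.tail (fun a => (h * bb α a) ^ j * G0 (h * bb α a))
    (fun a => mul_nonneg (by positivity) (h0 _)) fun a => ?_).2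
  have hb : (1:ℝ) ≤ bb α a := by exact_mod_cast bb_pos hα a
  have h3 : h * bb α a ≤ bb α a := by nlinarith
  refine mul_le_mul ?_ (h1 _) (h0 _) (by positivity)
  calc (h * bb α a) ^ j ≤ (bb α a : ℝ) ^ j := by gcongr
    _ ≤ (bb α a : ℝ) ^ 2 := pow_le_pow_right₀ hb hj

/-- normalized integrand -/
noncomputable def GG (α h : ℝ) (S : Finset ℕ) (n : ℕ) (u s v : ℝ) : ℂ :=
  Phi α h S ((u / sg α h : ℝ) + (s / sg α h : ℝ) * Complex.I) (v / BB α h)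
    * Complex.exp (-(n * (v / BB α h) : ℝ) * Complex.I)
    * Complex.exp (-((u / sg α h : ℝ) + (s / sg α h : ℝ) * Complex.I) * (muh α h : ℝ))

lemma GG_dom {α : ℝ} {η : ℕ → ℝ} {S : ℕ → Finset ℕ} (H : Sys α η S) (u s : ℝ) :
    ∃ K c : ℝ, 0 < c ∧ ∀ᶠ n : ℕ in atTop, ∀ v : ℝ, |v| ≤ π * BB α (η n) →
      ‖GG α (η n) (S n) n u s v‖ ≤ K * (Real.exp (-c * v ^ 2) + (1 + v ^ 2)⁻¹) := by
  have hα := H.pos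
  have hτ := tau_pos hα
  have hJ2 := II_ww_pos hα 2
  have hcut2 : 0 < II α (fun x => x ^ 2 * (ww x * cut x)) := by
    refine int_pos hα (expB_cut 2) (cont_cut 2)
      (fun x hx => mul_nonneg (by positivity) (mul_nonneg (ww_pos x).le (cut_nonneg x)))
      (x := 1/16) (by norm_num) ?_
    have h1 : 0 < ww (1/16) := ww_pos _
    have h2 : 0 < cut (1/16) := by unfold cut; norm_num
    positivity
  have tc2 := TT_tendsto hα (expB_cut 2) (cont_cut 2)
  have tc0 := TT_tendsto hα (expB_cut 0) (cont_cut 0)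
  set c2 := II α (fun x => x ^ 2 * (ww x * cut x)) / II α (fun x => x ^ 2 * ww x) / 2 with hc2
  have hc2pos : 0 < c2 := by positivity
  set M := II α (fun x => x ^ 0 * ff x) / tau α + 1 with hM
  set M0 := II α (fun x => x ^ 0 * (ww x * cut x)) / tau α + 1 with hM0
  have r1 : ∀ᶠ h in F0, muh α h / sg2 α h < M :=
    (ratio_lim (TF_lim hα 0) (sg2_lim hα) hτ).eventually (gt_mem_nhds (by rw [hM]; linarith))
  have r2 : ∀ᶠ h in F0, TT α (fun x => x ^ 0 * (ww x * cut x)) h / sg2 α h < M0 :=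
    (ratio_lim tc0 (sg2_lim hα) hτ).eventually (gt_mem_nhds (by rw [hM0]; linarith))
  have r3 : ∀ᶠ h in F0, c2 < TT α (fun x => x ^ 2 * (ww x * cut x)) h / TW α 2 h :=
    (ratio_lim tc2 (TW_lim hα 2) hJ2).eventually (lt_mem_nhds (by
      have : 0 < II α (fun x => x ^ 2 * (ww x * cut x)) / II α (fun x => x ^ 2 * ww x) := by
        positivity
      rw [hc2]; linarith))
  have r4 : ∀ᶠ h in F0, 0 < TW α 2 h :=
    (atTop_lim hα (TW_lim hα 2) hJ2).eventually (eventually_gt_atTop 0)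
  have r5 : ∀ᶠ h in F0, (1 + π ^ 2 * BB α h ^ 2) * Real.exp (-((Real.exp (-1) / 64) / h)) < 1 :=
    (BB_exp hα (by positivity)).eventually (gt_mem_nhds one_pos)
  have r6 : ∀ᶠ h in F0, |u| ≤ sg α h := (sg_atTop hα).eventually (eventually_ge_atTop _)
  have r7 : ∀ᶠ h in F0, |s| ≤ sg α h := (sg_atTop hα).eventually (eventually_ge_atTop _)
  have hM0pos : 0 ≤ M0 := by
    have : 0 ≤ II α (fun x => x ^ 0 * (ww x * cut x)) :=
      setIntegral_nonneg measurableSet_Ioi fun y _ =>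
        mul_nonneg (by simp) (mul_nonneg (ww_pos _).le (cut_nonneg _))
    positivity
  set K1 := Real.exp (-1) * (2 / π ^ 2) * (s ^ 2 * M0) with hK1
  have hK1pos : 0 ≤ K1 := by positivity
  refine ⟨Real.exp (1 + u ^ 2 * M) * Real.exp K1, Real.exp (-1) * (2 / π ^ 2) * (c2 / 2),
    by positivity, ?_⟩
  filter_upwards [eventually_ge_atTop 1, H.inv_le, H.tend.eventually F0_pos,
    H.tend.eventually (F0_lt (c := 1/2) (by norm_num)), H.tend.eventually (sg_sq hα),
    H.tend.eventually r1, H.tend.eventually r2, H.tend.eventually r3, H.tend.eventually r4,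
    H.tend.eventually r5, H.tend.eventually r6, H.tend.eventually r7]
    with n hn hinv hh hh2 ⟨hsq, hsg⟩ q1 q2 q3 q4 q5 q6 q7 v hv
  have hgood := H.good n hn
  set h := η n
  have hsg2 : 0 < sg2 α h := by rw [← hsq]; positivity
  have hB : 0 < BB α h := div_pos (Real.sqrt_pos.2 q4) hh
  have hBsq := BB_sq hh q4
  set σ := sg α h with hσ
  have hu1 : |u / σ| ≤ 1 := by
    rw [abs_div, abs_of_pos hsg, div_le_one hsg]; exact q6
  have hs1 : |s / σ| ≤ 1 := by
    rw [abs_div, abs_of_pos hsg, div_le_one hsg]; exact q7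
  have hμ := hgood.tail' hα hh (by linarith) (j := 0) (by norm_num) (fun x => (ff_pos x).le) (fun x => le_rfl)
  simp only [pow_zero, one_mul] at hμ
  have hmu : muh α h = TT α (fun x => ff x) h := by unfold muh; simp
  rw [← hmu] at hμ
  set m := ∑ a ∈ S n, ff (h * bb α a) with hm
  set D := ∑ a ∈ S n, ww (h * bb α a) * (1 - Real.cos (s / σ + v / BB α h * bb α a)) with hD
  have hnorm := Phi_norm α h (S n) (u := u / σ) (θ := s / σ) (v / BB α h) hu1
  have hn2 : ‖Complex.exp (-(n * (v / BB α h) : ℝ) * Complex.I)‖ = 1 := by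
    rw [← Complex.ofReal_neg, Complex.norm_exp_ofReal_mul_I]
  have hn3 : ‖Complex.exp (-((u / σ : ℝ) + (s / σ : ℝ) * Complex.I) * (muh α h : ℝ))‖
      = Real.exp (-(u / σ) * muh α h) := by
    rw [Complex.norm_exp]; congr 1; simp
  have hGG : ‖GG α h (S n) n u s v‖ ≤ Real.exp (1 + u ^ 2 * M) * Real.exp (-(Real.exp (-1) * D)) := by
    unfold GG
    rw [norm_mul, norm_mul, hn2, hn3, mul_one]
    calc _ ≤ (Real.exp ((u / σ + (u / σ) ^ 2) * m) * Real.exp (-(Real.exp (-1) * D)))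
          * Real.exp (-(u / σ) * muh α h) := by gcongr
      _ = Real.exp ((u / σ + (u / σ) ^ 2) * m + -(u / σ) * muh α h) * Real.exp (-(Real.exp (-1) * D)) := by
          rw [Real.exp_add]; ring
      _ ≤ _ := by
          refine mul_le_mul_of_nonneg_right (Real.exp_le_exp.2 ?_) (Real.exp_pos _).le
          have h1 : (u / σ) ^ 2 * m ≤ u ^ 2 * M := by
            calc (u / σ) ^ 2 * m ≤ (u / σ) ^ 2 * muh α h := by gcongr; exact hμ.1
              _ = u ^ 2 * (muh α h / sg2 α h) := by rw [div_pow, hsq]; ring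
              _ ≤ _ := by gcongr
          have h2 : (u / σ) * (m - muh α h) ≤ 1 := by
            calc (u / σ) * (m - muh α h) ≤ |(u / σ) * (m - muh α h)| := le_abs_self _
              _ ≤ 1 * 1 := by
                rw [abs_mul]
                gcongr
                rw [abs_le]; constructor <;> linarith
              _ = 1 := by norm_num
          linarith
  refine hGG.trans ?_
  rw [mul_assoc]
  gcongr
  have hE : 0 < Real.exp K1 := Real.exp_pos _
  have hE1 : 1 ≤ Real.exp K1 := Real.one_le_exp hK1pos
  rcases le_total |v / BB α h| (4 * π * h) with ht | ht
  · have hd := dom_small hh hgood.mem hinv hs1 ht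
    have h1 : (v / BB α h) ^ 2 / 2 * (h ^ 2)⁻¹ * TT α (fun x => x ^ 2 * (ww x * cut x)) h
        = v ^ 2 / 2 * (TT α (fun x => x ^ 2 * (ww x * cut x)) h / TW α 2 h) := by
      rw [div_pow, hBsq]; field_simp
    have h2 : (s / σ) ^ 2 * TT α (fun x => x ^ 0 * (ww x * cut x)) h
        = s ^ 2 * (TT α (fun x => x ^ 0 * (ww x * cut x)) h / sg2 α h) := by
      rw [div_pow, hsq]; ring
    rw [h1, h2] at hd
    have h3 : v ^ 2 / 2 * c2 ≤ v ^ 2 / 2 * (TT α (fun x => x ^ 2 * (ww x * cut x)) h / TW α 2 h) := by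
      gcongr
    have h4 : s ^ 2 * (TT α (fun x => x ^ 0 * (ww x * cut x)) h / sg2 α h) ≤ s ^ 2 * M0 := by
      gcongr
    have h5 : Real.exp (-1) * (2 / π ^ 2 * (v ^ 2 / 2 * c2 - s ^ 2 * M0)) ≤ Real.exp (-1) * D := by
      gcongr
      refine le_trans ?_ hd
      gcongr
    calc Real.exp (-(Real.exp (-1) * D))
        ≤ Real.exp (K1 + -(Real.exp (-1) * (2 / π ^ 2) * (c2 / 2)) * v ^ 2) := by
          gcongr
          rw [hK1]; linarith
      _ = Real.exp K1 * Real.exp (-(Real.exp (-1) * (2 / π ^ 2) * (c2 / 2)) * v ^ 2) := Real.exp_add _ _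
      _ ≤ _ := by
          gcongr
          have : 0 ≤ (1 + v ^ 2)⁻¹ := by positivity
          linarith
  · have htπ : |v / BB α h| ≤ π := by
      rw [abs_div, abs_of_pos hB, div_le_iff₀ hB]; exact hv
    have hd := dom_large (θ := s / σ) hα H.lt_one hh (by linarith) hgood.mem hinv ht htπ
    have hv2 : v ^ 2 ≤ π ^ 2 * BB α h ^ 2 := by
      rw [← mul_pow, ← sq_abs]; gcongr
    calc Real.exp (-(Real.exp (-1) * D)) ≤ Real.exp (-((Real.exp (-1) / 64) / h)) := by
          gcongr
          calc Real.exp (-1) / 64 / h = Real.exp (-1) * (1 / (64 * h)) := by field_simp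
            _ ≤ _ := by gcongr
      _ ≤ (1 + π ^ 2 * BB α h ^ 2)⁻¹ := by
          rw [le_inv_comm₀ (Real.exp_pos _) (by positivity), ← one_div, le_div_iff₀ (Real.exp_pos _)]
          exact q5.le
      _ ≤ (1 + v ^ 2)⁻¹ := by gcongr
      _ ≤ 1 * (Real.exp (-(Real.exp (-1) * (2 / π ^ 2) * (c2 / 2)) * v ^ 2) + (1 + v ^ 2)⁻¹) := by
          have := Real.exp_pos (-(Real.exp (-1) * (2 / π ^ 2) * (c2 / 2)) * v ^ 2)
          linarith
      _ ≤ _ := by gcongr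


lemma GG_eq (α h : ℝ) (S : Finset ℕ) (n : ℕ) (s v : ℝ) :
    GG α h S n 0 s v =
      (∏ a ∈ S, (1 + (ff (h * bb α a) : ℂ) *
        (Complex.exp (((s / sg α h + v / BB α h * bb α a : ℝ) : ℂ) * Complex.I) - 1)))
      * Complex.exp (-((∑ a ∈ S, ff (h * bb α a) * (s / sg α h + v / BB α h * bb α a) : ℝ) : ℂ) * Complex.I)
      * Complex.exp ((((s / sg α h) * (∑ a ∈ S, ff (h * bb α a) - muh α h)
          + (v / BB α h) * (∑ a ∈ S, bb α a * ff (h * bb α a) - n) : ℝ) : ℂ) * Complex.I) := by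
  unfold GG Phi
  rw [mul_assoc, mul_assoc, ← Complex.exp_add, ← Complex.exp_add]
  have h1 : ∑ a ∈ S, ff (h * bb α a) * (s / sg α h + v / BB α h * bb α a)
      = (s / sg α h) * ∑ a ∈ S, ff (h * bb α a) + (v / BB α h) * ∑ a ∈ S, bb α a * ff (h * bb α a) := by
    rw [Finset.mul_sum, Finset.mul_sum, ← Finset.sum_add_distrib]
    exact Finset.sum_congr rfl fun a _ => by ring
  congr 1
  · refine Finset.prod_congr rfl fun a _ => ?_
    congr 4
    push_cast; ring
  · rw [h1]
    congr 1
    push_cast; ring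

lemma abs_cube_le (a b : ℝ) : |a + b| ^ 3 ≤ 4 * (|a| ^ 3 + |b| ^ 3) := by
  have h := abs_add_le a b
  have ha := abs_nonneg a
  have hb := abs_nonneg b
  calc |a + b| ^ 3 ≤ (|a| + |b|) ^ 3 := by gcongr
    _ ≤ _ := by nlinarith [mul_nonneg (add_nonneg ha hb) (sq_nonneg (|a| - |b|))]

lemma four_le (a b : ℝ) : (a + b) ^ 4 ≤ 8 * (a ^ 4 + b ^ 4) := by
  nlinarith [sq_nonneg (a - b), sq_nonneg (a + b), sq_nonneg (a ^ 2 - b ^ 2),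
    mul_nonneg (sq_nonneg (a - b)) (sq_nonneg (a + b)), sq_nonneg ((a - b) ^ 2), sq_nonneg (a * b),
    mul_nonneg (sq_nonneg (a - b)) (sq_nonneg a), mul_nonneg (sq_nonneg (a - b)) (sq_nonneg b)]

lemma sum_le_TT {α h : ℝ} (hα : 0 < α) (hh : 0 < h) (S : Finset ℕ) (j : ℕ) :
    ∑ a ∈ S, (h * bb α a) ^ j * ff (h * bb α a) ≤ TT α (fun x => x ^ j * ff x) h :=
  (summ_H hα hh (expB_ff j)).sum_le_tsum S
    (fun a _ => mul_nonneg (by positivity) (ff_pos _).le)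

lemma squeeze_one {A T d : ℕ → ℝ} {L : ℝ} (h1 : ∀ᶠ n in atTop, A n ≤ T n ∧ T n ≤ A n + 1)
    (h2 : Tendsto (fun n => T n / d n) atTop (nhds L)) (h3 : Tendsto d atTop atTop) :
    Tendsto (fun n => A n / d n) atTop (nhds L) := by
  have h4 : Tendsto (fun n => T n / d n - 1 / d n) atTop (nhds (L - 0)) :=
    h2.sub (h3.const_div_atTop 1)
  rw [sub_zero] at h4
  refine tendsto_of_tendsto_of_tendsto_of_le_of_le' h4 h2 ?_ ?_
  · filter_upwards [h1, h3.eventually (eventually_gt_atTop 0)] with n hn hd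
    rw [← sub_div]; gcongr; linarith
  · filter_upwards [h1, h3.eventually (eventually_gt_atTop 0)] with n hn hd
    gcongr; exact hn.1

/-- limiting quadratic form -/
noncomputable def QQ (α s v : ℝ) : ℝ :=
  s ^ 2 * (II α (fun x => x ^ 0 * ww x) / tau α)
    + 2 * (s * v) * (II α (fun x => x ^ 1 * ww x) / (Real.sqrt (tau α) * Real.sqrt (II α (fun x => x ^ 2 * ww x))))
    + v ^ 2

lemma var_lim {α : ℝ} {η : ℕ → ℝ} {S : ℕ → Finset ℕ} (H : Sys α η S) (s v : ℝ) :
    Tendsto (fun n => ∑ a ∈ S n, ff (η n * bb α a) * (1 - ff (η n * bb α a)) *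
      (s / sg α (η n) + v / BB α (η n) * bb α a) ^ 2) atTop (nhds (QQ α s v)) := by
  have hα := H.pos
  have hτ := tau_pos hα
  have hJ2 := II_ww_pos hα 2
  have tl : ∀ j ≤ 2, ∀ᶠ n in atTop,
      ∑ a ∈ S n, (η n * bb α a) ^ j * ww (η n * bb α a) ≤ TW α j (η n) ∧
      TW α j (η n) ≤ ∑ a ∈ S n, (η n * bb α a) ^ j * ww (η n * bb α a) + 1 := by
    intro j hj
    filter_upwards [eventually_ge_atTop 1, H.tend.eventually F0_pos,
      H.tend.eventually (F0_lt one_pos)] with n hn h1 h2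
    exact (H.good n hn).tail' hα h1 h2.le hj (fun x => (ww_pos x).le) ww_le_ff
  have d0 : Tendsto (fun n => sg2 α (η n)) atTop atTop :=
    (atTop_lim hα (sg2_lim hα) hτ).comp H.tend
  have d1 : Tendsto (fun n => sg α (η n) * Real.sqrt (TW α 2 (η n))) atTop atTop :=
    ((sg_atTop hα).comp H.tend).atTop_mul_atTop₀ ((TW2_sqrt hα).comp H.tend)
  have d2 : Tendsto (fun n => TW α 2 (η n)) atTop atTop :=
    (atTop_lim hα (TW_lim hα 2) hJ2).comp H.tend
  have l0 := squeeze_one (tl 0 (by norm_num))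
    ((ratio_lim (TW_lim hα 0) (sg2_lim hα) hτ).comp H.tend) d0
  have l2 := squeeze_one (tl 2 le_rfl)
    ((ratio_lim (TW_lim hα 2) (TW_lim hα 2) hJ2).comp H.tend) d2
  have l1' : Tendsto (fun h => TW α 1 h / (sg α h * Real.sqrt (TW α 2 h))) F0
      (nhds (II α (fun x => x ^ 1 * ww x) / (Real.sqrt (tau α) * Real.sqrt (II α (fun x => x ^ 2 * ww x))))) := by
    refine ratio_lim (TW_lim hα 1) ?_ (by positivity)
    refine ((sg2_lim hα).sqrt.mul (TW_lim hα 2).sqrt).congr' ?_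
    filter_upwards [F0_pos] with h hh
    have hp : 0 ≤ h ^ (1/α) := (Real.rpow_pos_of_pos hh _).le
    unfold sg
    rw [Real.sqrt_mul hp, Real.sqrt_mul hp]
    rw [mul_mul_mul_comm, Real.mul_self_sqrt hp]
  have l1 := squeeze_one (tl 1 (by norm_num)) (l1'.comp H.tend) d1
  rw [div_self hJ2.ne'] at l2
  have key := ((l0.const_mul (s ^ 2)).add (l1.const_mul (2 * (s * v)))).add (l2.const_mul (v ^ 2))
  unfold QQ
  rw [mul_one] at key
  refine key.congr' ?_
  filter_upwards [H.tend.eventually F0_pos, H.tend.eventually (sg_sq hα),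
    d2.eventually (eventually_gt_atTop 0)] with n hh ⟨hsq, hsg⟩ hT
  have e0 : ∀ a, ff (η n * bb α a) * (1 - ff (η n * bb α a)) = ww (η n * bb α a) := fun a => (ww_eq _).symm
  simp only [e0]
  set r := Real.sqrt (TW α 2 (η n)) with hr
  have hr2 : r ^ 2 = TW α 2 (η n) := Real.sq_sqrt hT.le
  have hrp : 0 < r := Real.sqrt_pos.2 hT
  rw [← hsq, ← hr2]
  have e1 : ∀ a, ww (η n * bb α a) * (s / sg α (η n) + v / BB α (η n) * bb α a) ^ 2
      = s ^ 2 / sg α (η n) ^ 2 * ((η n * bb α a) ^ 0 * ww (η n * bb α a))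
        + 2 * (s * v) / (sg α (η n) * r) * ((η n * bb α a) ^ 1 * ww (η n * bb α a))
        + v ^ 2 / r ^ 2 * ((η n * bb α a) ^ 2 * ww (η n * bb α a)) := by
    intro a
    unfold BB
    rw [← hr]
    field_simp
    ring
  simp only [e1]
  rw [Finset.sum_add_distrib, Finset.sum_add_distrib, ← Finset.mul_sum, ← Finset.mul_sum, ← Finset.mul_sum]
  ring

lemma err_lim {α : ℝ} {η : ℕ → ℝ} {S : ℕ → Finset ℕ} (H : Sys α η S) (s v : ℝ) :
    Tendsto (fun n => ∑ a ∈ S n, (4 * (ff (η n * bb α a) * |s / sg α (η n) + v / BB α (η n) * bb α a| ^ 3)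
      + ff (η n * bb α a) * (s / sg α (η n) + v / BB α (η n) * bb α a) ^ 4)) atTop (nhds 0) := by
  have hα := H.pos
  have hτ := tau_pos hα
  have hJ2 := II_ww_pos hα 2
  have i1 : Tendsto (fun h => 1 / sg α h) F0 (nhds 0) := (sg_atTop hα).const_div_atTop 1
  have i2 : Tendsto (fun h => 1 / Real.sqrt (TW α 2 h)) F0 (nhds 0) := (TW2_sqrt hα).const_div_atTop 1
  have r0 := ratio_lim (TF_lim hα 0) (sg2_lim hα) hτ
  have r3 := ratio_lim (TF_lim hα 3) (TW_lim hα 2) hJ2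
  have r4 := ratio_lim (TF_lim hα 4) (TW_lim hα 2) hJ2
  have key := (((((r0.mul i1).const_mul (|s| ^ 3)).add ((r3.mul i2).const_mul (|v| ^ 3))).const_mul 16).add
    (((((r0.mul i1).mul i1).const_mul (s ^ 4)).add (((r4.mul i2).mul i2).const_mul (v ^ 4))).const_mul 8)).comp H.tend
  simp only [mul_zero, add_zero] at key
  refine squeeze_zero' (Eventually.of_forall fun n => Finset.sum_nonneg fun a _ => ?_) ?_ key
  · have := (ff_pos (η n * bb α a)).le
    positivity
  filter_upwards [H.tend.eventually F0_pos, H.tend.eventually (sg_sq hα),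
    ((atTop_lim hα (TW_lim hα 2) hJ2).comp H.tend).eventually (eventually_gt_atTop 0)]
    with n hh ⟨hsq, hsg⟩ hT
  simp only [Function.comp] at hT ⊢
  set r := Real.sqrt (TW α 2 (η n)) with hr
  have hr2 : r ^ 2 = TW α 2 (η n) := Real.sq_sqrt hT.le
  have hrp : 0 < r := Real.sqrt_pos.2 hT
  rw [← hsq, ← hr2]
  set σ := sg α (η n)
  have e1 : ∀ a, 4 * (ff (η n * bb α a) * |s / σ + v / BB α (η n) * bb α a| ^ 3)
      + ff (η n * bb α a) * (s / σ + v / BB α (η n) * bb α a) ^ 4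
      ≤ (16 * |s| ^ 3 / σ ^ 3 + 8 * s ^ 4 / σ ^ 4) * ((η n * bb α a) ^ 0 * ff (η n * bb α a))
        + 16 * |v| ^ 3 / r ^ 3 * ((η n * bb α a) ^ 3 * ff (η n * bb α a))
        + 8 * v ^ 4 / r ^ 4 * ((η n * bb α a) ^ 4 * ff (η n * bb α a)) := by
    intro a
    have hf := (ff_pos (η n * bb α a)).le
    have hx : v / BB α (η n) * bb α a = v / r * (η n * bb α a) := by
      unfold BB; rw [← hr]; field_simp
    rw [hx]
    have hy : 0 ≤ η n * bb α a := by positivity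
    have c1 := abs_cube_le (s / σ) (v / r * (η n * bb α a))
    have c2 := four_le (s / σ) (v / r * (η n * bb α a))
    rw [abs_mul, abs_div, abs_div, abs_of_pos hsg, abs_of_pos hrp, abs_of_nonneg hy] at c1
    calc _ ≤ 4 * (ff (η n * bb α a) * (4 * ((|s| / σ) ^ 3 + (|v| / r * (η n * bb α a)) ^ 3)))
          + ff (η n * bb α a) * (8 * ((s / σ) ^ 4 + (v / r * (η n * bb α a)) ^ 4)) := by gcongr
      _ = _ := by ring
  refine (Finset.sum_le_sum fun a _ => e1 a).trans ?_
  rw [Finset.sum_add_distrib, Finset.sum_add_distrib, ← Finset.mul_sum, ← Finset.mul_sum, ← Finset.mul_sum]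
  have t0 := sum_le_TT hα hh (S n) 0
  have t3 := sum_le_TT hα hh (S n) 3
  have t4 := sum_le_TT hα hh (S n) 4
  calc _ ≤ (16 * |s| ^ 3 / σ ^ 3 + 8 * s ^ 4 / σ ^ 4) * TT α (fun x => x ^ 0 * ff x) (η n)
        + 16 * |v| ^ 3 / r ^ 3 * TT α (fun x => x ^ 3 * ff x) (η n)
        + 8 * v ^ 4 / r ^ 4 * TT α (fun x => x ^ 4 * ff x) (η n) := by gcongr
    _ = _ := by field_simp; ring

lemma del_lim {α : ℝ} {η : ℕ → ℝ} {S : ℕ → Finset ℕ} (H : Sys α η S) (s v : ℝ) :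
    Tendsto (fun n : ℕ => (s / sg α (η n)) * (∑ a ∈ S n, ff (η n * bb α a) - muh α (η n))
          + (v / BB α (η n)) * (∑ a ∈ S n, bb α a * ff (η n * bb α a) - n)) atTop (nhds 0) := by
  have hα := H.pos
  have i1 : Tendsto (fun h => |s| / sg α h) F0 (nhds 0) := (sg_atTop hα).const_div_atTop _
  have i2 : Tendsto (fun h => |v| / BB α h) F0 (nhds 0) := (BB_atTop hα).const_div_atTop _
  have key := (i1.add i2).comp H.tend
  rw [add_zero] at key
  refine squeeze_zero_norm' ?_ key
  filter_upwards [eventually_ge_atTop 1, H.tend.eventually F0_pos,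
      H.tend.eventually (F0_lt one_pos), H.tend.eventually (sg_sq hα),
      ((BB_atTop hα).comp H.tend).eventually (eventually_gt_atTop 0)] with n hn hh h2 ⟨_, hsg⟩ hB
  simp only [Function.comp] at hB ⊢
  have g1 := (H.good n hn).tail' hα hh h2.le (j := 0) (by norm_num) (fun x => (ff_pos x).le) (fun x => le_rfl)
  have g2 := ((H.good n hn).tail (fun a => bb α a * ff (η n * bb α a))
    (fun a => mul_nonneg (by positivity) (ff_pos _).le) (fun a => by
      have hb : (1:ℝ) ≤ bb α a := by exact_mod_cast bb_pos hα a
      have := (ff_pos (η n * bb α a)).le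
      gcongr; nlinarith)).2
  rw [(NN_hasSum hα hh).tsum_eq, ← H.eq n hn] at g2
  change _ ≤ muh α (η n) ∧ muh α (η n) ≤ _ at g1
  simp only [pow_zero, one_mul] at g1
  refine (norm_add_le _ _).trans ?_
  rw [norm_mul, norm_mul, Real.norm_eq_abs, Real.norm_eq_abs, Real.norm_eq_abs, Real.norm_eq_abs,
    abs_div, abs_div, abs_of_pos hsg, abs_of_pos hB]
  have a1 : |∑ a ∈ S n, ff (η n * bb α a) - muh α (η n)| ≤ 1 := by
    rw [abs_le]; constructor <;> linarith
  have a2 : |∑ a ∈ S n, bb α a * ff (η n * bb α a) - n| ≤ 1 := by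
    rw [abs_le]; constructor <;> linarith
  calc _ ≤ |s| / sg α (η n) * 1 + |v| / BB α (η n) * 1 := by gcongr
    _ = _ := by ring

lemma GG_lim {α : ℝ} {η : ℕ → ℝ} {S : ℕ → Finset ℕ} (H : Sys α η S) (s v : ℝ) :
    Tendsto (fun n : ℕ => GG α (η n) (S n) n 0 s v) atTop
      (nhds ((Real.exp (-(QQ α s v) / 2) : ℝ) : ℂ)) := by
  simp only [GG_eq]
  have hd : Tendsto (fun n : ℕ => Complex.exp ((((s / sg α (η n)) * (∑ a ∈ S n, ff (η n * bb α a) - muh α (η n))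
          + (v / BB α (η n)) * (∑ a ∈ S n, bb α a * ff (η n * bb α a) - n) : ℝ) : ℂ) * Complex.I))
      atTop (nhds 1) := by
    have h1 : Tendsto (fun x : ℝ => Complex.exp ((x : ℂ) * Complex.I)) (nhds 0) (nhds 1) := by
      have : Continuous (fun x : ℝ => Complex.exp ((x : ℂ) * Complex.I)) := by fun_prop
      simpa using this.tendsto 0
    exact h1.comp (del_lim H s v)
  have hv : Tendsto (fun n : ℕ => ((Real.exp (-(∑ a ∈ S n, ff (η n * bb α a) * (1 - ff (η n * bb α a)) *
      (s / sg α (η n) + v / BB α (η n) * bb α a) ^ 2) / 2) : ℝ) : ℂ)) atTop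
      (nhds ((Real.exp (-(QQ α s v) / 2) : ℝ) : ℂ)) := by
    refine (Complex.continuous_ofReal.tendsto _).comp ((Real.continuous_exp.tendsto _).comp ?_)
    exact (var_lim H s v).neg.div_const 2
  have he := squeeze_zero_norm (fun n => prod_approx (S n) (fun a => ff (η n * bb α a))
    (fun a => s / sg α (η n) + v / BB α (η n) * bb α a)
    (fun a => ⟨(ff_pos _).le, (ff_lt_one _).le⟩)) (err_lim H s v)
  have h3 := (he.add hv).mul hd
  simp only [zero_add, mul_one, sub_add_cancel] at h3
  exact h3


/-- normalized number of parts -/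
noncomputable def XX (α h : ℝ) (A : Finset ℕ) : ℝ := ((A.card : ℝ) - muh α h) / sg α h

lemma int_GG (α h : ℝ) (S : Finset ℕ) (n : ℕ) (u s : ℝ) (hB : 0 < BB α h) :
    ∫ v in (-(π * BB α h))..(π * BB α h), GG α h S n u s v
      = ((2 * π * WW α h S n * BB α h : ℝ) : ℂ)
        * ∑ A ∈ PP α S n, Complex.exp ((u + s * Complex.I) * (XX α h A : ℝ)) := by
  set z : ℂ := (u / sg α h : ℝ) + (s / sg α h : ℝ) * Complex.I with hz
  have h1 : ∀ v, GG α h S n u s v = (fun t : ℝ => (Phi α h S z t * Complex.exp (-(n * t : ℝ) * Complex.I))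
      * Complex.exp (-z * (muh α h : ℝ))) (v / BB α h) := fun v => rfl
  simp only [h1]
  rw [intervalIntegral.integral_comp_div (f := fun t : ℝ => (Phi α h S z t * Complex.exp (-(n * t : ℝ) * Complex.I))
      * Complex.exp (-z * (muh α h : ℝ))) hB.ne']
  rw [neg_div, mul_div_assoc, div_self hB.ne', mul_one, intervalIntegral.integral_mul_const, Phi_integral]
  rw [Complex.real_smul, mul_assoc (2 * (π:ℂ) * (WW α h S n : ℂ)), Finset.sum_mul]
  have h2 : ∀ A : Finset ℕ, Complex.exp (z * (A.card : ℕ)) * Complex.exp (-z * (muh α h : ℝ))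
      = Complex.exp ((u + s * Complex.I) * (XX α h A : ℝ)) := by
    intro A
    rw [← Complex.exp_add, hz]
    congr 1
    unfold XX
    push_cast
    ring
  simp only [h2]
  push_cast
  ring

lemma QQ_eq {α : ℝ} (hα : 0 < α) (s : ℝ) : ∃ k : ℝ, ∀ v, QQ α s v = s ^ 2 + (v + k) ^ 2 := by
  have hτ := tau_pos hα
  have hJ2 := II_ww_pos hα 2
  set k0 := II α (fun x => x ^ 1 * ww x) / (Real.sqrt (tau α) * Real.sqrt (II α (fun x => x ^ 2 * ww x))) with hk
  have h1 : II α (fun x => x ^ 0 * ww x) / tau α = 1 + k0 ^ 2 := by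
    rw [hk, div_pow, mul_pow, Real.sq_sqrt hτ.le, Real.sq_sqrt hJ2.le]
    have h2 : II α (fun x => x ^ 0 * ww x) = tau α + II α (fun x => x ^ 1 * ww x) ^ 2 / II α (fun x => x ^ 2 * ww x) := by
      unfold tau; ring
    rw [h2]
    field_simp
  refine ⟨s * k0, fun v => ?_⟩
  unfold QQ
  rw [h1, ← hk]; ring

lemma int_QQ {α : ℝ} (hα : 0 < α) (s : ℝ) :
    ∫ v : ℝ, ((Real.exp (-(QQ α s v) / 2) : ℝ) : ℂ) = ((Real.sqrt (2 * π) * Real.exp (-s ^ 2 / 2) : ℝ) : ℂ) := by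
  obtain ⟨k, hk⟩ := QQ_eq hα s
  rw [integral_complex_ofReal]
  congr 1
  have h1 : ∀ v, Real.exp (-(QQ α s v) / 2) = Real.exp (-s ^ 2 / 2) * (fun v => Real.exp (-(1/2) * v ^ 2)) (v + k) := by
    intro v
    rw [hk]
    simp only
    rw [← Real.exp_add]; congr 1; ring
  simp only [h1]
  rw [integral_const_mul, integral_add_right_eq_self (fun v => Real.exp (-(1/2) * v ^ 2)), integral_gaussian]
  rw [mul_comm]; congr 2; ring

lemma GG_cont (α h : ℝ) (S : Finset ℕ) (n : ℕ) (u s : ℝ) : Continuous (fun v => GG α h S n u s v) := by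
  unfold GG Phi
  fun_prop

lemma dom_int {c K : ℝ} (hc : 0 < c) :
    Integrable (fun v : ℝ => K * (Real.exp (-c * v ^ 2) + (1 + v ^ 2)⁻¹)) :=
  ((integrable_exp_neg_mul_sq hc).add integrable_inv_one_add_sq).const_mul K

lemma I_lim {α : ℝ} {η : ℕ → ℝ} {S : ℕ → Finset ℕ} (H : Sys α η S) (s : ℝ) :
    Tendsto (fun n : ℕ => ∫ v in (-(π * BB α (η n)))..(π * BB α (η n)), GG α (η n) (S n) n 0 s v) atTop
      (nhds ((Real.sqrt (2 * π) * Real.exp (-s ^ 2 / 2) : ℝ) : ℂ)) := by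
  have hα := H.pos
  obtain ⟨K, c, hc, hdom⟩ := GG_dom H 0 s
  rw [← int_QQ hα s]
  have hBt := (BB_atTop hα).comp H.tend
  have key : Tendsto (fun n : ℕ => ∫ v : ℝ, (Set.Ioc (-(π * BB α (η n))) (π * BB α (η n))).indicator
      (fun v => GG α (η n) (S n) n 0 s v) v) atTop (nhds (∫ v : ℝ, ((Real.exp (-(QQ α s v) / 2) : ℝ) : ℂ))) := by
    refine tendsto_integral_filter_of_dominated_convergence
      (fun v : ℝ => K * (Real.exp (-c * v ^ 2) + (1 + v ^ 2)⁻¹)) ?_ ?_ (dom_int hc) ?_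
    · exact Eventually.of_forall fun n => ((GG_cont _ _ _ _ _ _).aestronglyMeasurable).indicator measurableSet_Ioc
    · filter_upwards [hdom, hBt.eventually (eventually_gt_atTop 0)] with n hn hBn
      refine Eventually.of_forall fun v => ?_
      by_cases hv : v ∈ Set.Ioc (-(π * BB α (η n))) (π * BB α (η n))
      · rw [Set.indicator_of_mem hv]
        exact hn v (abs_le.2 ⟨hv.1.le, hv.2⟩)
      · rw [Set.indicator_of_notMem hv, norm_zero]
        by_cases hK : 0 ≤ K
        · positivity
        · exfalso
          have h0 := (norm_nonneg _).trans (hn 0 (by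
            rw [abs_zero]
            exact mul_nonneg Real.pi_pos.le (le_of_lt hBn)))
          have : 0 < Real.exp (-c * 0 ^ 2) + (1 + (0:ℝ) ^ 2)⁻¹ := by positivity
          nlinarith
    · refine Eventually.of_forall fun v => (GG_lim H s v).congr' ?_
      filter_upwards [hBt.eventually (eventually_gt_atTop |v|)] with n hn
      simp only [Function.comp] at hn
      rw [Set.indicator_of_mem]
      have h1 : |v| < π * BB α (η n) := by
        nlinarith [abs_nonneg v, Real.pi_gt_three]
      exact ⟨(abs_lt.1 h1).1, (abs_lt.1 h1).2.le⟩
  refine key.congr' ?_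
  filter_upwards [hBt.eventually (eventually_gt_atTop 0)] with n hn
  simp only [Function.comp] at hn
  rw [intervalIntegral.integral_of_le (by nlinarith [Real.pi_gt_three]), integral_indicator measurableSet_Ioc]

lemma I_bound {α : ℝ} {η : ℕ → ℝ} {S : ℕ → Finset ℕ} (H : Sys α η S) (u : ℝ) :
    ∃ C : ℝ, ∀ᶠ n : ℕ in atTop,
      ‖∫ v in (-(π * BB α (η n)))..(π * BB α (η n)), GG α (η n) (S n) n u 0 v‖ ≤ C := by
  have hα := H.pos
  obtain ⟨K, c, hc, hdom⟩ := GG_dom H u 0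
  have hBt := (BB_atTop hα).comp H.tend
  refine ⟨∫ v : ℝ, |K * (Real.exp (-c * v ^ 2) + (1 + v ^ 2)⁻¹)|, ?_⟩
  filter_upwards [hBt.eventually (eventually_gt_atTop 0), hdom] with n hn hd
  simp only [Function.comp] at hn
  have hle : -(π * BB α (η n)) ≤ π * BB α (η n) := by nlinarith [Real.pi_gt_three]
  rw [intervalIntegral.integral_of_le hle]
  refine (norm_integral_le_integral_norm _).trans ?_
  refine le_trans ?_ (setIntegral_le_integral (s := Set.Ioc (-(π * BB α (η n))) (π * BB α (η n)))
    (dom_int hc).abs (Eventually.of_forall fun v => abs_nonneg _))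
  refine setIntegral_mono_on ?_ (dom_int hc).abs.integrableOn measurableSet_Ioc ?_
  · exact ((GG_cont _ _ _ _ _ _).norm.integrableOn_Icc).mono_set Set.Ioc_subset_Icc_self
  · intro v hv
    exact (hd v (abs_le.2 ⟨hv.1.le, hv.2⟩)).trans (le_abs_self _)

/-- average over the partitions -/
noncomputable def EE (α : ℝ) (S : Finset ℕ) (n : ℕ) (F : Finset ℕ → ℝ) : ℝ :=
  (∑ A ∈ PP α S n, F A) / (PP α S n).card

lemma PP_pos {α : ℝ} {η : ℕ → ℝ} {S : ℕ → Finset ℕ} (H : Sys α η S) :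
    ∀ᶠ n : ℕ in atTop, 0 < (PP α (S n) n).card := by
  have h0 := I_lim H 0
  have hne : ((Real.sqrt (2 * π) * Real.exp (-0 ^ 2 / 2) : ℝ) : ℂ) ≠ 0 := by
    rw [Complex.ofReal_ne_zero]; positivity
  filter_upwards [h0.eventually_ne hne, ((BB_atTop H.pos).comp H.tend).eventually (eventually_gt_atTop 0)]
    with n hn hB
  rw [int_GG _ _ _ _ _ _ hB] at hn
  rw [Finset.card_pos]
  by_contra hcon
  rw [Finset.not_nonempty_iff_eq_empty] at hcon
  rw [hcon] at hn
  simp at hn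

lemma chi_lim {α : ℝ} {η : ℕ → ℝ} {S : ℕ → Finset ℕ} (H : Sys α η S) (s : ℝ) :
    Tendsto (fun n : ℕ => (∑ A ∈ PP α (S n) n, Complex.exp (((s * XX α (η n) A : ℝ) : ℂ) * Complex.I))
      / ((PP α (S n) n).card : ℂ)) atTop (nhds ((Real.exp (-s ^ 2 / 2) : ℝ) : ℂ)) := by
  have h0 := I_lim H 0
  have hne : ((Real.sqrt (2 * π) * Real.exp (-0 ^ 2 / 2) : ℝ) : ℂ) ≠ 0 := by
    rw [Complex.ofReal_ne_zero]; positivity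
  have h1 := (I_lim H s).div h0 hne
  have e : ((Real.sqrt (2 * π) * Real.exp (-s ^ 2 / 2) : ℝ) : ℂ) / ((Real.sqrt (2 * π) * Real.exp (-0 ^ 2 / 2) : ℝ) : ℂ)
      = ((Real.exp (-s ^ 2 / 2) : ℝ) : ℂ) := by
    have : Real.sqrt (2 * π) ≠ 0 := by positivity
    rw [← Complex.ofReal_div]
    congr 1
    simp
    field_simp
  rw [e] at h1
  refine h1.congr' ?_
  filter_upwards [((BB_atTop H.pos).comp H.tend).eventually (eventually_gt_atTop 0)] with n hB
  simp only [Function.comp] at hB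
  simp only [Pi.div_apply]
  rw [int_GG _ _ _ _ _ _ hB, int_GG _ _ _ _ _ _ hB]
  have hW := WW_pos α (η n) (S n) n
  have hc : ((2 * π * WW α (η n) (S n) n * BB α (η n) : ℝ) : ℂ) ≠ 0 := by
    rw [Complex.ofReal_ne_zero]; positivity
  rw [mul_div_mul_left _ _ hc]
  simp only [Complex.ofReal_zero, zero_mul, add_zero, zero_add, Complex.exp_zero, Finset.sum_const, nsmul_eq_mul, mul_one]
  congr 1
  refine Finset.sum_congr rfl fun A _ => ?_
  congr 1; push_cast; ring

lemma mgf_bound {α : ℝ} {η : ℕ → ℝ} {S : ℕ → Finset ℕ} (H : Sys α η S) (u : ℝ) :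
    ∃ C : ℝ, ∀ᶠ n : ℕ in atTop, EE α (S n) n (fun A => Real.exp (u * XX α (η n) A)) ≤ C := by
  obtain ⟨C, hC⟩ := I_bound H u
  have h0 := (I_lim H 0).norm
  have hgt : 1 < ‖((Real.sqrt (2 * π) * Real.exp (-0 ^ 2 / 2) : ℝ) : ℂ)‖ := by
    have : (1:ℝ) < Real.sqrt (2 * π) := by
      rw [Real.lt_sqrt (by norm_num)]; nlinarith [Real.pi_gt_three]
    have e : Real.exp (-0 ^ 2 / 2) = 1 := by simp
    rw [Complex.norm_real, Real.norm_of_nonneg (by positivity), e, mul_one]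
    exact this
  refine ⟨C, ?_⟩
  filter_upwards [hC, h0.eventually (lt_mem_nhds hgt), PP_pos H,
    ((BB_atTop H.pos).comp H.tend).eventually (eventually_gt_atTop 0)] with n h1 h2 h3 hB
  simp only [Function.comp] at hB
  have hW := WW_pos α (η n) (S n) n
  rw [int_GG _ _ _ _ _ _ hB] at h1 h2
  have hP : (0:ℝ) < (PP α (S n) n).card := by exact_mod_cast h3
  have hcc : 0 < 2 * π * WW α (η n) (S n) n * BB α (η n) := by positivity
  set cc := 2 * π * WW α (η n) (S n) n * BB α (η n) with hccdef
  have e1 : ∑ A ∈ PP α (S n) n, Complex.exp (((u : ℝ) + ((0:ℝ) : ℂ) * Complex.I) * (XX α (η n) A : ℝ))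
      = ((∑ A ∈ PP α (S n) n, Real.exp (u * XX α (η n) A) : ℝ) : ℂ) := by
    push_cast
    simp
  have e2 : ∑ A ∈ PP α (S n) n, Complex.exp ((((0:ℝ) : ℂ) + ((0:ℝ) : ℂ) * Complex.I) * (XX α (η n) A : ℝ))
      = (((PP α (S n) n).card : ℝ) : ℂ) := by
    simp
  rw [e1, norm_mul, Complex.norm_real, Complex.norm_real, Real.norm_of_nonneg hcc.le,
    Real.norm_of_nonneg (Finset.sum_nonneg fun A _ => (Real.exp_pos _).le)] at h1
  rw [e2, norm_mul, Complex.norm_real, Complex.norm_real, Real.norm_of_nonneg hcc.le,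
    Real.norm_of_nonneg hP.le] at h2
  have hC0 : 0 ≤ C := le_trans (mul_nonneg hcc.le (Finset.sum_nonneg fun A _ => (Real.exp_pos _).le)) h1
  unfold EE
  rw [div_le_iff₀ hP]
  have h4 : cc * (∑ A ∈ PP α (S n) n, Real.exp (u * XX α (η n) A)) ≤ cc * (C * (PP α (S n) n).card) := by
    nlinarith
  exact le_of_mul_le_mul_left h4 hcc


lemma EE_mono {α : ℝ} {S : Finset ℕ} {n : ℕ} {F G : Finset ℕ → ℝ} (h : ∀ A, F A ≤ G A) :
    EE α S n F ≤ EE α S n G := by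
  unfold EE
  gcongr
  exact h _

lemma cube_le (x : ℝ) : |x| ^ 3 ≤ 6 * (Real.exp (1 * x) + Real.exp (-1 * x)) := by
  have h1 := Real.pow_div_factorial_le_exp |x| (abs_nonneg x) 3
  have h2 : Real.exp |x| ≤ Real.exp (1 * x) + Real.exp (-1 * x) := by
    rcases abs_cases x with ⟨h, _⟩ | ⟨h, _⟩ <;> rw [h]
    · rw [one_mul]; linarith [Real.exp_pos (-1 * x)]
    · rw [neg_one_mul]; linarith [Real.exp_pos (1 * x)]
  simp [Nat.factorial] at h1
  simp at h2
  simp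
  linarith

lemma third_bound {α : ℝ} {η : ℕ → ℝ} {S : ℕ → Finset ℕ} (H : Sys α η S) :
    ∃ C : ℝ, ∀ᶠ n : ℕ in atTop, EE α (S n) n (fun A => |XX α (η n) A| ^ 3) ≤ C := by
  obtain ⟨C1, h1⟩ := mgf_bound H 1
  obtain ⟨C2, h2⟩ := mgf_bound H (-1)
  refine ⟨6 * (C1 + C2), ?_⟩
  filter_upwards [h1, h2] with n h1 h2
  refine (EE_mono fun A => cube_le (XX α (η n) A)).trans ?_
  calc _ = 6 * (EE α (S n) n (fun A => Real.exp (1 * XX α (η n) A)) +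
        EE α (S n) n (fun A => Real.exp (-1 * XX α (η n) A))) := by
        unfold EE; rw [← Finset.mul_sum, Finset.sum_add_distrib]; ring
    _ ≤ _ := by gcongr

lemma chi_taylor (α h : ℝ) (S : Finset ℕ) (n : ℕ) (s : ℝ) (hP : 0 < (PP α S n).card) :
    ‖(∑ A ∈ PP α S n, Complex.exp (((s * XX α h A : ℝ) : ℂ) * Complex.I)) / ((PP α S n).card : ℂ)
      - (1 + (s * EE α S n (fun A => XX α h A) : ℝ) * Complex.I
        - ((s ^ 2 * EE α S n (fun A => XX α h A ^ 2) / 2 : ℝ) : ℂ))‖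
      ≤ 4 * |s| ^ 3 * EE α S n (fun A => |XX α h A| ^ 3) := by
  have hP' : (0:ℝ) < (PP α S n).card := by exact_mod_cast hP
  have hPc : ((PP α S n).card : ℂ) ≠ 0 := by exact_mod_cast hP.ne'
  have e1 : (∑ A ∈ PP α S n, Complex.exp (((s * XX α h A : ℝ) : ℂ) * Complex.I)) / ((PP α S n).card : ℂ)
      - (1 + (s * EE α S n (fun A => XX α h A) : ℝ) * Complex.I
        - ((s ^ 2 * EE α S n (fun A => XX α h A ^ 2) / 2 : ℝ) : ℂ))
      = (∑ A ∈ PP α S n, (Complex.exp (((s * XX α h A : ℝ) : ℂ) * Complex.I)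
        - (1 + ((s * XX α h A : ℝ) : ℂ) * Complex.I - ((s * XX α h A : ℝ) : ℂ) ^ 2 / 2))) / ((PP α S n).card : ℂ) := by
    unfold EE
    rw [Finset.sum_sub_distrib, Finset.sum_sub_distrib, Finset.sum_add_distrib]
    have q1 : ∑ A ∈ PP α S n, ((s * XX α h A : ℝ) : ℂ) * Complex.I
        = (s * ∑ A ∈ PP α S n, (XX α h A : ℂ)) * Complex.I := by
      rw [Finset.mul_sum, Finset.sum_mul]; push_cast; rfl
    have q2 : ∑ A ∈ PP α S n, ((s * XX α h A : ℝ) : ℂ) ^ 2 / 2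
        = s ^ 2 * (∑ A ∈ PP α S n, (XX α h A : ℂ) ^ 2) / 2 := by
      rw [Finset.mul_sum, Finset.sum_div]
      refine Finset.sum_congr rfl fun A _ => ?_
      push_cast; ring
    rw [q1, q2, Finset.sum_const, nsmul_eq_mul, mul_one]
    generalize (∑ A ∈ PP α S n, Complex.exp (((s * XX α h A : ℝ) : ℂ) * Complex.I)) = Z
    push_cast
    field_simp
  rw [e1, norm_div, Complex.norm_natCast]
  unfold EE
  rw [← mul_div_assoc]
  gcongr
  refine (norm_sum_le _ _).trans ?_
  rw [Finset.mul_sum]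
  refine Finset.sum_le_sum fun A _ => ?_
  refine (exp_i_taylor (s * XX α h A)).trans (le_of_eq ?_)
  rw [abs_mul, mul_pow]; ring

lemma small_lim {m : ℕ → ℝ} (K : ℝ) (hm : ∀ s : ℝ, 0 < s → s ≤ 1 → ∃ e : ℕ → ℝ, Tendsto e atTop (nhds 0) ∧
    ∀ᶠ n in atTop, |m n| ≤ K * s + e n) : Tendsto m atTop (nhds 0) := by
  rw [Metric.tendsto_nhds]
  intro ε hε
  obtain ⟨e, he, hb⟩ := hm (min 1 (ε / (2 * (|K| + 1)))) (by positivity) (min_le_left _ _)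
  filter_upwards [hb, he.eventually (gt_mem_nhds (half_pos hε))] with n h1 h2
  rw [Real.dist_eq, sub_zero]
  have h3 : K * min 1 (ε / (2 * (|K| + 1))) ≤ ε / 2 := by
    calc K * min 1 (ε / (2 * (|K| + 1))) ≤ (|K| + 1) * (ε / (2 * (|K| + 1))) := by
          gcongr
          · linarith [le_abs_self K]
          · exact min_le_right _ _
      _ = ε / 2 := by field_simp
  linarith

lemma exp_t {s : ℝ} : |Real.exp (-s ^ 2 / 2) - (1 - s ^ 2 / 2)| ≤ s ^ 4 / 8 := by
  have h1 := Real.add_one_le_exp (-s ^ 2 / 2)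
  have h2 : Real.exp (-s ^ 2 / 2) ≤ 1 - s ^ 2 / 2 + s ^ 4 / 8 := by
    have h3 := Real.quadratic_le_exp_of_nonneg (x := s ^ 2 / 2) (by positivity)
    have h4 : -s ^ 2 / 2 = -(s ^ 2 / 2) := by ring
    rw [h4, Real.exp_neg, inv_le_comm₀ (Real.exp_pos _) (by nlinarith [sq_nonneg (s ^ 2 - 2)])]
    refine le_trans ?_ h3
    rw [inv_le_comm₀ (by nlinarith [sq_nonneg (s ^ 2 - 2)]) (by positivity), ← one_div, div_le_iff₀ (by positivity)]
    nlinarith [sq_nonneg (s ^ 4), sq_nonneg (s^2)]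
  rw [abs_le]; constructor <;> nlinarith [sq_nonneg (s ^ 2)]

lemma moments {α : ℝ} {η : ℕ → ℝ} {S : ℕ → Finset ℕ} (H : Sys α η S) :
    Tendsto (fun n => EE α (S n) n (fun A => XX α (η n) A)) atTop (nhds 0) ∧
    Tendsto (fun n => EE α (S n) n (fun A => XX α (η n) A ^ 2)) atTop (nhds 1) := by
  obtain ⟨C, hC⟩ := third_bound H
  constructor
  · refine small_lim (4 * |C|) fun s hs hs1 => ?_
    have hx := chi_lim H s
    refine ⟨fun n => |((∑ A ∈ PP α (S n) n, Complex.exp (((s * XX α (η n) A : ℝ) : ℂ) * Complex.I))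
      / ((PP α (S n) n).card : ℂ)).im| / s, ?_, ?_⟩
    · have := (((Complex.continuous_im.tendsto _).comp hx).abs).div_const s
      rw [Complex.ofReal_im, abs_zero, zero_div] at this
      exact this
    · filter_upwards [hC, PP_pos H] with n h1 h2
      have h3 := (Complex.abs_im_le_norm _).trans (chi_taylor α (η n) (S n) n s h2)
      set χ := (∑ A ∈ PP α (S n) n, Complex.exp (((s * XX α (η n) A : ℝ) : ℂ) * Complex.I))
        / ((PP α (S n) n).card : ℂ) with hχ
      set m := EE α (S n) n (fun A => XX α (η n) A)
      have h4 : (χ - (1 + (s * m : ℝ) * Complex.I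
        - ((s ^ 2 * EE α (S n) n (fun A => XX α (η n) A ^ 2) / 2 : ℝ) : ℂ))).im = χ.im - s * m := by
        rw [Complex.sub_im, Complex.sub_im, Complex.add_im, Complex.im_ofReal_mul, Complex.ofReal_im]
        simp
      rw [h4, abs_of_pos hs] at h3
      have h5 : 4 * s ^ 3 * EE α (S n) n (fun A => |XX α (η n) A| ^ 3) ≤ 4 * s ^ 3 * |C| := by
        gcongr; exact h1.trans (le_abs_self C)
      have h6 : |s * m| ≤ |χ.im| + 4 * s ^ 3 * |C| := by
        have := abs_sub_abs_le_abs_sub (s * m) χ.im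
        rw [abs_sub_comm] at this
        linarith
      rw [abs_mul, abs_of_pos hs] at h6
      have h7 : s ^ 3 ≤ s ^ 2 := by nlinarith [sq_nonneg s]
      have h8 : s * |m| ≤ s * (4 * |C| * s + |χ.im| / s) := by
        have : s * (4 * |C| * s + |χ.im| / s) = 4 * s ^ 2 * |C| + |χ.im| := by field_simp
        rw [this]
        nlinarith [abs_nonneg C]
      exact le_of_mul_le_mul_left h8 hs
  · have : Tendsto (fun n => EE α (S n) n (fun A => XX α (η n) A ^ 2) - 1) atTop (nhds 0) := by
      refine small_lim (8 * |C| + 1) fun s hs hs1 => ?_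
      have hx := chi_lim H s
      refine ⟨fun n => 2 * |((∑ A ∈ PP α (S n) n, Complex.exp (((s * XX α (η n) A : ℝ) : ℂ) * Complex.I))
        / ((PP α (S n) n).card : ℂ)).re - Real.exp (-s ^ 2 / 2)| / s ^ 2, ?_, ?_⟩
      · have h0 := (Complex.continuous_re.tendsto _).comp hx
        rw [Complex.ofReal_re] at h0
        have := (((h0.sub_const (Real.exp (-s ^ 2 / 2))).abs).const_mul 2).div_const (s ^ 2)
        simpa using this
      · filter_upwards [hC, PP_pos H] with n h1 h2
        have h3 := (Complex.abs_re_le_norm _).trans (chi_taylor α (η n) (S n) n s h2)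
        set χ := (∑ A ∈ PP α (S n) n, Complex.exp (((s * XX α (η n) A : ℝ) : ℂ) * Complex.I))
          / ((PP α (S n) n).card : ℂ) with hχ
        set m := EE α (S n) n (fun A => XX α (η n) A ^ 2)
        have h4 : (χ - (1 + (s * EE α (S n) n (fun A => XX α (η n) A) : ℝ) * Complex.I
          - ((s ^ 2 * m / 2 : ℝ) : ℂ))).re = χ.re - (1 - s ^ 2 * m / 2) := by
          rw [Complex.sub_re, Complex.sub_re, Complex.add_re, Complex.re_ofReal_mul, Complex.ofReal_re]
          simp
        rw [h4, abs_of_pos hs] at h3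
        have h5 : 4 * s ^ 3 * EE α (S n) n (fun A => |XX α (η n) A| ^ 3) ≤ 4 * s ^ 3 * |C| := by
          gcongr; exact h1.trans (le_abs_self C)
        have h6 := exp_t (s := s)
        set e := Real.exp (-s ^ 2 / 2)
        have h7 : |s ^ 2 / 2 * (m - 1)| ≤ |χ.re - e| + s ^ 4 / 8 + 4 * s ^ 3 * |C| := by
          have e1 : s ^ 2 / 2 * (m - 1) = (χ.re - (1 - s ^ 2 * m / 2)) - (χ.re - e) - (e - (1 - s ^ 2 / 2)) := by
            ring
          rw [e1]
          have := abs_sub (χ.re - (1 - s ^ 2 * m / 2) - (χ.re - e)) (e - (1 - s ^ 2 / 2))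
          have := abs_sub (χ.re - (1 - s ^ 2 * m / 2)) (χ.re - e)
          linarith
        have hs2 : 0 < s ^ 2 / 2 := by positivity
        rw [abs_mul, abs_of_pos hs2] at h7
        have h8 : s ^ 2 / 2 * |m - 1| ≤ s ^ 2 / 2 * ((8 * |C| + 1) * s + 2 * |χ.re - e| / s ^ 2) := by
          have : s ^ 2 / 2 * ((8 * |C| + 1) * s + 2 * |χ.re - e| / s ^ 2) = 4 * s ^ 3 * |C| + s ^ 3 / 2 + |χ.re - e| := by
            field_simp; ring
          rw [this]
          have : s ^ 4 ≤ s ^ 3 := pow_le_pow_of_le_one hs.le hs1 (by norm_num)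
          nlinarith [pow_pos hs 3]
        exact le_of_mul_le_mul_left h8 hs2
    simpa using this.add_const 1


/-- normal distribution function -/
noncomputable def Phn (x : ℝ) : ℝ := (∫ t in Set.Iio x, Real.exp (-t ^ 2 / 2)) / Real.sqrt (2 * π)

lemma Phn_int : Integrable (fun t : ℝ => Real.exp (-t ^ 2 / 2)) := by
  have := integrable_exp_neg_mul_sq (b := 1/2) (by norm_num)
  refine this.congr (Eventually.of_forall fun t => ?_)
  simp only
  congr 1; ring

lemma gauss_real (s : Set ℝ) : (ProbabilityTheory.gaussianReal 0 1).real s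
    = (∫ t in s, Real.exp (-t ^ 2 / 2)) / Real.sqrt (2 * π) := by
  rw [measureReal_def, ProbabilityTheory.gaussianReal_apply_eq_integral 0 one_ne_zero s,
    ENNReal.toReal_ofReal (integral_nonneg fun x => ProbabilityTheory.gaussianPDFReal_nonneg _ _ _),
    ProbabilityTheory.gaussianPDFReal_def]
  simp only [NNReal.coe_one, mul_one, sub_zero]
  rw [integral_const_mul, div_eq_inv_mul]

lemma Phn_eq (x : ℝ) : Phn x = (ProbabilityTheory.gaussianReal 0 1).real (Set.Iio x) := (gauss_real _).symm

lemma Phn_cdf (x : ℝ) : Phn x = ProbabilityTheory.cdf (ProbabilityTheory.gaussianReal 0 1) x := by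
  rw [ProbabilityTheory.cdf_eq_real, gauss_real, integral_Iic_eq_integral_Iio]; rfl

lemma Phn_mono : Monotone Phn := by
  intro x y hxy
  rw [Phn_cdf, Phn_cdf]
  exact ProbabilityTheory.monotone_cdf _ hxy

lemma Phn_cont : Continuous Phn := by
  unfold Phn
  refine Continuous.div_const ?_ _
  have h1 : ∀ x : ℝ, ∫ t in Set.Iio x, Real.exp (-t ^ 2 / 2)
      = (∫ t in Set.Iic (0:ℝ), Real.exp (-t ^ 2 / 2)) + ∫ t in (0:ℝ)..x, Real.exp (-t ^ 2 / 2) := by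
    intro x
    rw [← integral_Iic_eq_integral_Iio, ← intervalIntegral.integral_Iic_sub_Iic Phn_int.integrableOn Phn_int.integrableOn]
    ring
  simp only [h1]
  exact continuous_const.add (intervalIntegral.continuous_primitive (fun a b => Phn_int.intervalIntegrable) 0)

lemma Phn_surj {y : ℝ} (h0 : 0 < y) (h1 : y < 1) : ∃ x, Phn x = y := by
  have hb := ProbabilityTheory.tendsto_cdf_atBot (ProbabilityTheory.gaussianReal 0 1)
  have ht := ProbabilityTheory.tendsto_cdf_atTop (ProbabilityTheory.gaussianReal 0 1)
  obtain ⟨a, ha⟩ := (hb.eventually (gt_mem_nhds h0)).exists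
  obtain ⟨b, hb⟩ := (ht.eventually (lt_mem_nhds h1)).exists
  rw [← Phn_cdf] at ha hb
  exact mem_range_of_exists_le_of_exists_ge Phn_cont ⟨a, ha.le⟩ ⟨b, hb.le⟩

lemma Phn_nonneg (x : ℝ) : 0 ≤ Phn x := by rw [Phn_cdf]; exact ProbabilityTheory.cdf_nonneg _ _
lemma Phn_le_one (x : ℝ) : Phn x ≤ 1 := by rw [Phn_cdf]; exact ProbabilityTheory.cdf_le_one _ _

/-- pointwise convergence of distribution functions to a continuous one is uniform -/
lemma polya {F : ℕ → ℝ → ℝ} (hmono : ∀ n, Monotone (F n)) (h0 : ∀ n x, 0 ≤ F n x) (h1 : ∀ n x, F n x ≤ 1)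
    (hlim : ∀ x, Tendsto (fun n => F n x) atTop (nhds (Phn x))) (ε : ℝ) (hε : 0 < ε) :
    ∀ᶠ n in atTop, ∀ x, |F n x - Phn x| ≤ ε := by
  obtain ⟨N, hN⟩ := exists_nat_gt (3 / ε)
  have hNpos : (0:ℝ) < N := lt_trans (by positivity) hN
  have hN3 : 3 / (N:ℝ) ≤ ε := by
    rw [div_le_iff₀ hNpos]; rw [div_lt_iff₀ hε] at hN; linarith
  have hex : ∀ i : ℕ, ∃ x, 0 < i → i < N → Phn x = i / N := by
    intro i
    by_cases hi : 0 < i ∧ i < N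
    · have hi1 : (0:ℝ) < i := by exact_mod_cast hi.1
      have hi2 : (i:ℝ) < N := by exact_mod_cast hi.2
      obtain ⟨x, hx⟩ := Phn_surj (y := (i:ℝ) / N) (by positivity) (by rw [div_lt_one hNpos]; exact hi2)
      exact ⟨x, fun _ _ => hx⟩
    · exact ⟨0, fun a b => absurd ⟨a, b⟩ hi⟩
  choose X hX using hex
  have hev : ∀ᶠ n in atTop, ∀ i ∈ Finset.range N, |F n (X i) - Phn (X i)| < 1 / N := by
    rw [Filter.eventually_all_finset]
    intro i _
    have := (hlim (X i)).eventually (Metric.ball_mem_nhds _ (show (0:ℝ) < 1 / N by positivity))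
    simpa [Real.dist_eq] using this
  filter_upwards [hev] with n hn x
  have hp0 := Phn_nonneg x
  have hp1 := Phn_le_one x
  set i := ⌊(N:ℝ) * Phn x⌋₊ with hi
  have i1 : (i:ℝ) ≤ N * Phn x := Nat.floor_le (by positivity)
  have i2 : N * Phn x < i + 1 := Nat.lt_floor_add_one _
  have i1' : (i:ℝ) / N ≤ Phn x := by rw [div_le_iff₀ hNpos]; linarith
  have i2' : Phn x < (i + 1 : ℝ) / N := by rw [lt_div_iff₀ hNpos]; linarith
  have hsplit : (i + 1 : ℝ) / N = i / N + 1 / N := by ring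
  have h3 : 3 / (N:ℝ) = 1 / N + 1 / N + 1 / N := by ring
  have hNinv : 0 < 1 / (N:ℝ) := by positivity
  rw [abs_le]
  constructor
  · by_cases hc : 2 ≤ i
    · have hiN : i - 1 < N := by
        have : (i:ℝ) ≤ N := i1.trans (by nlinarith)
        have : i ≤ N := by exact_mod_cast this
        omega
      have e := hX (i - 1) (by omega) hiN
      have e2 := hn (i - 1) (Finset.mem_range.2 hiN)
      rw [e, Nat.cast_sub (by omega), Nat.cast_one] at e2
      rw [Nat.cast_sub (by omega), Nat.cast_one, sub_div] at e
      rw [sub_div] at e2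
      have hle : X (i - 1) ≤ x := by
        by_contra hcon
        push Not at hcon
        have := Phn_mono hcon.le
        linarith
      have := hmono n hle
      have := (abs_lt.1 e2).1
      linarith
    · have : (i:ℝ) ≤ 1 := by
        have : i ≤ 1 := by omega
        exact_mod_cast this
      have : (i:ℝ) / N ≤ 1 / N := by gcongr
      have := h0 n x
      linarith
  · by_cases hc : i + 1 < N
    · have e := hX (i + 1) (by omega) hc
      have e2 := hn (i + 1) (Finset.mem_range.2 hc)
      rw [e] at e2
      push_cast at e e2
      have hle : x ≤ X (i + 1) := by
        by_contra hcon
        push Not at hcon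
        have := Phn_mono hcon.le
        linarith
      have := hmono n hle
      have := (abs_lt.1 e2).2
      linarith
    · have : (N:ℝ) ≤ i + 1 := by
        have : N ≤ i + 1 := by omega
        exact_mod_cast this
      have : 1 ≤ (i + 1 : ℝ) / N := by rw [le_div_iff₀ hNpos]; linarith
      have := h1 n x
      linarith

/-- the empirical measure -/
noncomputable def mm (P : Finset (Finset ℕ)) (X : Finset ℕ → ℝ) : Measure ℝ :=
  (P.card : ENNReal)⁻¹ • ∑ A ∈ P, Measure.dirac (X A)

lemma mm_prob {P : Finset (Finset ℕ)} (X : Finset ℕ → ℝ) (hP : 0 < P.card) : IsProbabilityMeasure (mm P X) := by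
  constructor
  unfold mm
  have h1 : (P.card : ENNReal) ≠ 0 := by exact_mod_cast hP.ne'
  simp only [Measure.smul_apply, Measure.finsetSum_apply, measure_univ, Finset.sum_const, nsmul_eq_mul, mul_one, smul_eq_mul]
  exact ENNReal.inv_mul_cancel h1 (ENNReal.natCast_ne_top _)

lemma mm_char (P : Finset (Finset ℕ)) (X : Finset ℕ → ℝ) (s : ℝ) :
    charFun (mm P X) s = (∑ A ∈ P, Complex.exp (((s * X A : ℝ) : ℂ) * Complex.I)) / (P.card : ℂ) := by
  rw [charFun_apply_real]
  unfold mm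
  rw [integral_smul_measure, integral_finsetSum_measure]
  · simp only [integral_dirac]
    rw [ENNReal.toReal_inv, ENNReal.toReal_natCast, Complex.real_smul]
    push_cast
    rw [div_eq_inv_mul]
  · intro A _
    exact integrable_dirac (by simp)

lemma mm_Iio (P : Finset (Finset ℕ)) (X : Finset ℕ → ℝ) (x : ℝ) :
    (mm P X).real (Set.Iio x) = (∑ A ∈ P, if X A < x then (1:ℝ) else 0) / P.card := by
  unfold mm
  rw [measureReal_def, Measure.smul_apply, Measure.finsetSum_apply, smul_eq_mul, ENNReal.toReal_mul,
    ENNReal.toReal_inv, ENNReal.toReal_natCast, ENNReal.toReal_sum (fun A _ => measure_ne_top _ _), div_eq_inv_mul]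
  congr 1
  refine Finset.sum_congr rfl fun A _ => ?_
  rw [Measure.dirac_apply' _ measurableSet_Iio]
  by_cases h : X A < x <;> simp [Set.indicator, h]

lemma cdf_lim {α : ℝ} {η : ℕ → ℝ} {S : ℕ → Finset ℕ} (H : Sys α η S) (ε : ℝ) (hε : 0 < ε) :
    ∀ᶠ n : ℕ in atTop, ∀ x, |EE α (S n) n (fun A => if XX α (η n) A < x then (1:ℝ) else 0) - Phn x| ≤ ε := by
  classical
  refine polya (F := fun n x => EE α (S n) n (fun A => if XX α (η n) A < x then (1:ℝ) else 0)) ?_ ?_ ?_ ?_ ε hε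
  · intro n x y hxy
    refine EE_mono fun A => ?_
    by_cases h : XX α (η n) A < x
    · simp [h, h.trans_le hxy]
    · simp only [h, if_false]; split_ifs <;> norm_num
  · intro n x
    exact div_nonneg (Finset.sum_nonneg fun A _ => by split_ifs <;> norm_num) (by positivity)
  · intro n x
    refine div_le_one_of_le₀ ?_ (by positivity)
    calc _ ≤ ∑ A ∈ PP α (S n) n, (1:ℝ) := Finset.sum_le_sum fun A _ => by split_ifs <;> norm_num
      _ = _ := by simp
  · intro x
    let μs : ℕ → ProbabilityMeasure ℝ := fun n =>
      if h : 0 < (PP α (S n) n).card then ⟨mm (PP α (S n) n) (XX α (η n)), mm_prob _ h⟩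
      else ⟨Measure.dirac 0, inferInstance⟩
    have hμ : ∀ᶠ n in atTop, (μs n : Measure ℝ) = mm (PP α (S n) n) (XX α (η n)) := by
      filter_upwards [PP_pos H] with n hn
      have e : μs n = ⟨mm (PP α (S n) n) (XX α (η n)), mm_prob _ hn⟩ := dif_pos hn
      rw [e]
      rfl
    let μ0 : ProbabilityMeasure ℝ := ⟨ProbabilityTheory.gaussianReal 0 1, inferInstance⟩
    have hconv : Tendsto μs atTop (nhds μ0) := by
      rw [ProbabilityMeasure.tendsto_iff_tendsto_charFun]
      intro t
      have e : charFun (μ0 : Measure ℝ) t = ((Real.exp (-t ^ 2 / 2) : ℝ) : ℂ) := by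
        change charFun (ProbabilityTheory.gaussianReal 0 1) t = _
        rw [ProbabilityTheory.charFun_gaussianReal]
        push_cast
        congr 1
        simp
        ring
      rw [e]
      refine (chi_lim H t).congr' ?_
      filter_upwards [hμ] with n hn
      rw [hn, mm_char]
    have h2 := ProbabilityMeasure.tendsto_measure_of_null_frontier_of_tendsto' hconv (E := Set.Iio x) (by
      change ProbabilityTheory.gaussianReal 0 1 (frontier (Set.Iio x)) = 0
      rw [frontier_Iio]
      have := ProbabilityTheory.nullSingletonClass_gaussianReal (μ := 0) (v := 1) one_ne_zero
      exact measure_singleton x)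
    have h3 := (ENNReal.tendsto_toReal (measure_ne_top _ _)).comp h2
    change Tendsto _ _ (nhds ((ProbabilityTheory.gaussianReal 0 1).real (Set.Iio x))) at h3
    rw [← Phn_eq] at h3
    refine h3.congr' ?_
    filter_upwards [hμ] with n hn
    simp only [Function.comp]
    rw [hn]
    exact mm_Iio _ _ _


lemma asym {α : ℝ} {η : ℕ → ℝ} {S : ℕ → Finset ℕ} (H : Sys α η S) {f : ℝ → ℝ} {A : ℝ} (hA : 0 < A)
    (hf : Tendsto (fun h : ℝ => h ^ (1/α) * f h) F0 (nhds A)) :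
    Tendsto (fun n : ℕ => f (η n) / ((A / II α (fun x => x ^ 1 * ff x) ^ (1 / (α + 1))) * (n : ℝ) ^ (1 / (α + 1))))
      atTop (nhds 1) := by
  have hα := H.pos
  have hI := II_ff_pos hα 1
  have hIp : 0 < II α (fun x => x ^ 1 * ff x) ^ (1 / (α + 1)) := Real.rpow_pos_of_pos hI _
  have h1 := ((TF_lim hα 1).comp H.tend).rpow_const (p := 1 / (α + 1)) (Or.inl hI.ne')
  have h2 := (hf.comp H.tend).div (h1.const_mul (A / II α (fun x => x ^ 1 * ff x) ^ (1 / (α + 1))))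
    (by positivity)
  have e : A / (A / II α (fun x => x ^ 1 * ff x) ^ (1 / (α + 1)) * II α (fun x => x ^ 1 * ff x) ^ (1 / (α + 1))) = 1 := by
    rw [div_mul_cancel₀ _ hIp.ne', div_self hA.ne']
  rw [e] at h2
  refine h2.congr' ?_
  filter_upwards [eventually_ge_atTop 1, H.tend.eventually F0_pos] with n hn hh
  simp only [Pi.div_apply, Function.comp]
  have hTT : TT α (fun x => x ^ 1 * ff x) (η n) = η n * n := by
    rw [H.eq n hn]; unfold NN; field_simp
  have e2 : (η n ^ (1/α) * TT α (fun x => x ^ 1 * ff x) (η n)) ^ (1 / (α + 1))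
      = η n ^ (1/α) * (n:ℝ) ^ (1 / (α + 1)) := by
    rw [hTT, ← mul_assoc, Real.mul_rpow (by positivity) (by positivity)]
    congr 1
    rw [← Real.rpow_add_one hh.ne', ← Real.rpow_mul hh.le]
    congr 1
    field_simp
    ring
  rw [e2]
  have : η n ^ (1/α) ≠ 0 := (Real.rpow_pos_of_pos hh _).ne'
  rw [mul_left_comm, mul_div_mul_left _ _ this]

lemma partMean_EE {α : ℝ} {S : Finset ℕ} {n : ℕ} (hS : ∀ a, bb α a ≤ n → a ∈ S) :
    partMean α n = EE α S n (fun A => (A.card : ℝ)) := by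
  unfold partMean EE
  rw [tsum_qnm hS (fun m => (m : ℝ)), qn_eq hS]

lemma partVar_EE {α : ℝ} {S : Finset ℕ} {n : ℕ} (hS : ∀ a, bb α a ≤ n → a ∈ S) :
    partVar α n = EE α S n (fun A => ((A.card : ℝ) - partMean α n) ^ 2) := by
  unfold partVar EE
  rw [tsum_qnm hS (fun m => ((m : ℝ) - partMean α n) ^ 2), qn_eq hS]

lemma cdf_EE {α : ℝ} {S : Finset ℕ} {n : ℕ} (hS : ∀ a, bb α a ≤ n → a ∈ S) (y : ℝ) :
    cdf α n y = EE α S n (fun A => if (A.card : ℝ) < y then 1 else 0) := by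
  unfold cdf EE
  have : ∀ m : ℕ, (if (m : ℝ) < y then (qnm α n m : ℝ) else 0)
      = (fun m : ℕ => if (m : ℝ) < y then (1:ℝ) else 0) m * qnm α n m := by
    intro m; simp only; split_ifs <;> simp
  simp only [this]
  rw [tsum_qnm hS (fun m : ℕ => if (m : ℝ) < y then (1:ℝ) else 0), qn_eq hS]

lemma EE_affine {α : ℝ} {S : Finset ℕ} {n : ℕ} (hP : 0 < (PP α S n).card) (F : Finset ℕ → ℝ) (c d : ℝ) :
    EE α S n (fun A => c + d * F A) = c + d * EE α S n F := by
  have hP' : (0:ℝ) < (PP α S n).card := by exact_mod_cast hP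
  unfold EE
  rw [Finset.sum_add_distrib, ← Finset.mul_sum, Finset.sum_const, nsmul_eq_mul]
  field_simp

lemma EE_sq {α : ℝ} {S : Finset ℕ} {n : ℕ} (hP : 0 < (PP α S n).card) (F : Finset ℕ → ℝ) (d : ℝ) :
    EE α S n (fun A => (d * (F A - EE α S n F)) ^ 2) = d ^ 2 * (EE α S n (fun A => F A ^ 2) - EE α S n F ^ 2) := by
  have hP' : (0:ℝ) < (PP α S n).card := by exact_mod_cast hP
  set m := EE α S n F with hm
  have h1 : ∑ A ∈ PP α S n, F A = m * (PP α S n).card := by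
    rw [hm]; unfold EE; field_simp
  have h2 : ∀ A, (d * (F A - m)) ^ 2 = d ^ 2 * F A ^ 2 + (-(2 * d ^ 2 * m)) * F A + d ^ 2 * m ^ 2 := fun A => by ring
  simp only [h2]
  unfold EE
  rw [Finset.sum_add_distrib, Finset.sum_add_distrib, ← Finset.mul_sum, ← Finset.mul_sum, h1, Finset.sum_const, nsmul_eq_mul]
  field_simp
  ring

lemma mu_eq {α : ℝ} (hα : 0 < α) {h : ℝ} (hh : 0 < h) :
    ∑' k : ℕ, (g α k : ℝ) / (Real.exp (h * k) + 1) = muh α h := by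
  have := (tsum_g_eq hα hh 0 (expB_ff 0) (u := fun k : ℕ => (g α k : ℝ) / (Real.exp (h * k) + 1))
    (fun k => by unfold ff; ring)).tsum_eq
  rw [this, pow_zero, inv_one, one_mul]; rfl

lemma sg2_eq {α : ℝ} (hα : 0 < α) {h : ℝ} (hh : 0 < h) :
    (∑' k : ℕ, (g α k : ℝ) * Real.exp (h * k) / (Real.exp (h * k) + 1) ^ 2)
          - (∑' k : ℕ, (g α k : ℝ) * k * Real.exp (h * k) / (Real.exp (h * k) + 1) ^ 2) ^ 2
            / (∑' k : ℕ, (g α k : ℝ) * k ^ 2 * Real.exp (h * k) / (Real.exp (h * k) + 1) ^ 2) = sg2 α h := by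
  have h0 := (tsum_g_eq hα hh 0 (expB_ww 0)
    (u := fun k : ℕ => (g α k : ℝ) * Real.exp (h * k) / (Real.exp (h * k) + 1) ^ 2)
    (fun k => by unfold ww; ring)).tsum_eq
  have h1 := (tsum_g_eq hα hh 1 (expB_ww 1)
    (u := fun k : ℕ => (g α k : ℝ) * k * Real.exp (h * k) / (Real.exp (h * k) + 1) ^ 2)
    (fun k => by unfold ww; ring)).tsum_eq
  have h2 := (tsum_g_eq hα hh 2 (expB_ww 2)
    (u := fun k : ℕ => (g α k : ℝ) * k ^ 2 * Real.exp (h * k) / (Real.exp (h * k) + 1) ^ 2)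
    (fun k => by unfold ww; ring)).tsum_eq
  rw [h0, h1, h2]
  unfold sg2 TW
  field_simp

lemma main_sys {α : ℝ} {η : ℕ → ℝ} {S : ℕ → Finset ℕ} (H : Sys α η S) :
    (∀ ε > (0:ℝ), ∀ᶠ n : ℕ in atTop, ∀ x : ℝ,
        |cdf α n (muh α (η n) + x * Real.sqrt (sg2 α (η n))) - Phn x| ≤ ε) ∧
    Tendsto (fun n : ℕ => partMean α n / muh α (η n)) atTop (nhds 1) ∧
    Tendsto (fun n : ℕ => partVar α n / sg2 α (η n)) atTop (nhds 1) := by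
  have hα := H.pos
  have hτ := tau_pos hα
  have hI0 := II_ff_pos hα 0
  obtain ⟨hm1, hm2⟩ := moments H
  have mean : ∀ᶠ n in atTop, partMean α n
      = muh α (η n) + sg α (η n) * EE α (S n) n (fun A => XX α (η n) A) := by
    filter_upwards [eventually_ge_atTop 1, PP_pos H, H.tend.eventually (sg_sq hα)] with n hn hP ⟨_, hsg⟩
    rw [partMean_EE (H.good n hn).mem, ← EE_affine hP]
    congr 1
    funext A
    unfold XX
    field_simp
    ring
  refine ⟨?_, ?_, ?_⟩
  · intro ε hε
    filter_upwards [cdf_lim H ε hε, eventually_ge_atTop 1, H.tend.eventually (sg_sq hα)] with n h1 hn ⟨_, hsg⟩ x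
    rw [cdf_EE (H.good n hn).mem]
    have e : ∀ A : Finset ℕ, ((A.card : ℝ) < muh α (η n) + x * Real.sqrt (sg2 α (η n))) ↔ XX α (η n) A < x := by
      intro A
      unfold XX
      rw [div_lt_iff₀ hsg, sub_lt_iff_lt_add']
      rfl
    simp only [e]
    exact h1 x
  · have i1 : Tendsto (fun h => 1 / sg α h) F0 (nhds 0) := (sg_atTop hα).const_div_atTop 1
    have r := ratio_lim (sg2_lim hα) (TF_lim hα 0) hI0
    have key := (((r.mul i1).comp H.tend).mul hm1).const_add 1
    simp only [mul_zero, add_zero] at key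
    refine key.congr' ?_
    filter_upwards [mean, H.tend.eventually (sg_sq hα),
      ((atTop_lim hα (TF_lim hα 0) hI0).comp H.tend).eventually (eventually_gt_atTop 0)] with n h1 ⟨hsq, hsg⟩ hmu
    rw [h1]
    simp only [Function.comp] at hmu ⊢
    change 0 < muh α (η n) at hmu
    change 1 + sg2 α (η n) / muh α (η n) * (1 / sg α (η n)) * _ = _
    rw [← hsq]
    field_simp
  · have key := hm2.sub (hm1.pow 2)
    simp only [ne_eq, OfNat.ofNat_ne_zero, not_false_eq_true, zero_pow, sub_zero] at key
    refine key.congr' ?_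
    filter_upwards [mean, eventually_ge_atTop 1, PP_pos H, H.tend.eventually (sg_sq hα)] with n h1 hn hP ⟨hsq, hsg⟩
    rw [partVar_EE (H.good n hn).mem]
    have e : ∀ A : Finset ℕ, ((A.card : ℝ) - partMean α n) ^ 2
        = (sg α (η n) * (XX α (η n) A - EE α (S n) n (fun A => XX α (η n) A))) ^ 2 := by
      intro A
      rw [h1]
      congr 1
      unfold XX
      field_simp
      ring
    simp only [e]
    rw [EE_sq hP (fun A => XX α (η n) A), ← hsq]
    field_simp

/-- **Central limit theorem** (Theorem 1): `ϖ_n` is asymptotically normally distributed,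
with `η = η_n > 0` the unique solution of `n = ∑_{k≥1} k g(k)/(e^{ηk}+1)`,
`μ_n = ∑_{k≥1} g(k)/(e^{ηk}+1)` and
`σ_n² = ∑ g(k)e^{ηk}/(e^{ηk}+1)² − (∑ g(k)k e^{ηk}/(e^{ηk}+1)²)²/(∑ g(k)k² e^{ηk}/(e^{ηk}+1)²)`;
moreover `E(ϖ_n) ∼ μ_n ∼ c₁ n^{1/(α+1)}` and `V(ϖ_n) ∼ σ_n² ∼ c₂ n^{1/(α+1)}`. -/
theorem central_limit_theorem (α : ℝ) (hα : 0 < α ∧ α < 1) :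
    (∀ n : ℕ, 1 ≤ n → ∃! η : ℝ, 0 < η ∧
      (n : ℝ) = ∑' k : ℕ, (k : ℝ) * g α k / (Real.exp (η * k) + 1)) ∧
    ∃ c₁ > (0:ℝ), ∃ c₂ > (0:ℝ), ∀ η : ℕ → ℝ,
      (∀ n : ℕ, 1 ≤ n → 0 < η n ∧
        (n : ℝ) = ∑' k : ℕ, (k : ℝ) * g α k / (Real.exp (η n * k) + 1)) →
      letI μ : ℕ → ℝ := fun n => ∑' k : ℕ, (g α k : ℝ) / (Real.exp (η n * k) + 1)
      letI σ2 : ℕ → ℝ := fun n =>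
        (∑' k : ℕ, (g α k : ℝ) * Real.exp (η n * k) / (Real.exp (η n * k) + 1) ^ 2)
          - (∑' k : ℕ, (g α k : ℝ) * k * Real.exp (η n * k) / (Real.exp (η n * k) + 1) ^ 2) ^ 2
            / (∑' k : ℕ, (g α k : ℝ) * k ^ 2 * Real.exp (η n * k) / (Real.exp (η n * k) + 1) ^ 2)
      -- asymptotic normality, uniformly in x
      (∀ ε > (0:ℝ), ∀ᶠ n : ℕ in atTop, ∀ x : ℝ,
        |cdf α n (μ n + x * Real.sqrt (σ2 n))
          - (∫ t in Set.Iio x, Real.exp (-t ^ 2 / 2)) / Real.sqrt (2 * π)| ≤ ε) ∧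
      -- E(ϖ_n) ∼ μ_n ∼ c₁ n^{1/(α+1)}
      Tendsto (fun n : ℕ => partMean α n / μ n) atTop (nhds 1) ∧
      Tendsto (fun n : ℕ => μ n / (c₁ * (n : ℝ) ^ (1 / (α + 1)))) atTop (nhds 1) ∧
      -- V(ϖ_n) ∼ σ_n² ∼ c₂ n^{1/(α+1)}
      Tendsto (fun n : ℕ => partVar α n / σ2 n) atTop (nhds 1) ∧
      Tendsto (fun n : ℕ => σ2 n / (c₂ * (n : ℝ) ^ (1 / (α + 1)))) atTop (nhds 1) := by
  obtain ⟨h0, h1⟩ := hα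
  refine ⟨fun n hn => eta_exists h0 n hn, ?_⟩
  have hI := II_ff_pos h0 1
  have hI0 := II_ff_pos h0 0
  have hτ := tau_pos h0
  refine ⟨II α (fun x => x ^ 0 * ff x) / II α (fun x => x ^ 1 * ff x) ^ (1 / (α + 1)), by positivity,
    tau α / II α (fun x => x ^ 1 * ff x) ^ (1 / (α + 1)), by positivity, ?_⟩
  intro η hη
  have hη' : ∀ n : ℕ, 1 ≤ n → 0 < η n ∧ (n : ℝ) = NN α (η n) := by
    intro n hn
    obtain ⟨hp, he⟩ := hη n hn
    exact ⟨hp, by rw [← NN_eq h0 hp]; exact he⟩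
  have hex : ∀ n : ℕ, ∃ S : Finset ℕ, 1 ≤ n → Good α (η n) n S := by
    intro n
    by_cases hn : 1 ≤ n
    · obtain ⟨S, hS⟩ := exists_good h0 (hη' n hn).1 n
      exact ⟨S, fun _ => hS⟩
    · exact ⟨∅, fun h => absurd h hn⟩
  choose S hS using hex
  have H : Sys α η S := ⟨h0, h1, eta_tendsto h0 hη', fun n hn => (hη' n hn).2, hS⟩
  obtain ⟨m1, m2, m3⟩ := main_sys H
  have a1 := asym H (f := muh α) hI0 (TF_lim h0 0)
  have a2 := asym H (f := sg2 α) hτ (sg2_lim h0)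
  have hpos := H.tend.eventually F0_pos
  refine ⟨?_, ?_, ?_, ?_, ?_⟩
  · intro ε hε
    filter_upwards [m1 ε hε, hpos] with n hn hp x
    rw [mu_eq h0 hp, sg2_eq h0 hp]
    exact hn x
  · refine m2.congr' ?_
    filter_upwards [hpos] with n hp
    rw [mu_eq h0 hp]
  · refine a1.congr' ?_
    filter_upwards [hpos] with n hp
    rw [mu_eq h0 hp]
  · refine m3.congr' ?_
    filter_upwards [hpos] with n hp
    rw [sg2_eq h0 hp]
  · refine a2.congr' ?_
    filter_upwards [hpos] with n hp
    rw [sg2_eq h0 hp]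
end

section
/- Let 0<α<1 and β:=1/α. For every positive integer k one has (β−1)·k^{β−1} < g(k) < β·2^β·k^{β−1}. -/
open Real

lemma rpow_tangent (b x y : ℝ) (hb : 1 ≤ b) (hx : 0 < x) (hy : 0 ≤ y) :
    x ^ b + b * x ^ (b - 1) * (y - x) ≤ y ^ b := by
  have hs : -1 ≤ (y - x) / x := by
    rw [le_div_iff₀ hx]; linarith
  have h := one_add_mul_self_le_rpow_one_add hs hb
  have e : 1 + (y - x) / x = y / x := by field_simp; ring
  rw [e, Real.div_rpow hy hx.le, le_div_iff₀ (Real.rpow_pos_of_pos hx b)] at h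
  have e2 : x ^ b = x ^ (b - 1) * x := by
    rw [Real.rpow_sub_one hx.ne']; field_simp
  have e3 : (1 + b * ((y - x) / x)) * x ^ b = x ^ b + b * x ^ (b - 1) * (y - x) := by
    rw [e2]; field_simp
  linarith

lemma g_eq_s3 (α β : ℝ) (hα : 0 < α) (hβ : β = 1 / α) (k : ℕ) (hk : 1 ≤ k) :
    g α k = ⌈((k : ℝ) + 1) ^ β⌉₊ - ⌈(k : ℝ) ^ β⌉₊ := by
  have hb : β = α⁻¹ := by rw [hβ, one_div]
  have hk0 : (0 : ℝ) < k := by exact_mod_cast hk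
  have hs : {n : ℕ | 1 ≤ n ∧ ⌊(n : ℝ) ^ α⌋ = (k : ℤ)} =
      ((Finset.Ico ⌈(k : ℝ) ^ β⌉₊ ⌈((k : ℝ) + 1) ^ β⌉₊ : Finset ℕ) : Set ℕ) := by
    ext n
    simp only [Set.mem_setOf_eq, Finset.coe_Ico, Set.mem_Ico, Nat.ceil_le, Nat.lt_ceil,
      Int.floor_eq_iff, Int.cast_natCast]
    rw [hb, Real.rpow_inv_le_iff_of_pos hk0.le (Nat.cast_nonneg n) hα,
      Real.lt_rpow_inv_iff_of_pos (Nat.cast_nonneg n) (by positivity) hα]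
    constructor
    · exact fun h => h.2
    · intro h
      refine ⟨?_, h⟩
      by_contra hn
      have : n = 0 := by omega
      subst this
      rw [Nat.cast_zero, Real.zero_rpow hα.ne'] at h
      linarith [h.1]
  rw [g, hs, Set.ncard_coe_finset, Nat.card_Ico]

/-- Lemma (Li–Chen): `(β−1)·k^{β−1} < g(k) < β·2^β·k^{β−1}` for all `k ≥ 1`. -/
theorem g_order (α β : ℝ) (hα : 0 < α ∧ α < 1) (hβ : β = 1 / α)
    (k : ℕ) (hk : 1 ≤ k) :
    (β - 1) * (k : ℝ) ^ (β - 1) < (g α k : ℝ) ∧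
    (g α k : ℝ) < β * 2 ^ β * (k : ℝ) ^ (β - 1) := by
  have hb : 1 < β := by rw [hβ, lt_div_iff₀ hα.1]; linarith [hα.2]
  have hk1 : (1 : ℝ) ≤ k := by exact_mod_cast hk
  have hk0 : (0 : ℝ) < k := by linarith
  have hle : (k : ℝ) ^ β ≤ ((k : ℝ) + 1) ^ β :=
    Real.rpow_le_rpow hk0.le (by linarith) (by linarith)
  rw [g_eq_s3 α β hα.1 hβ k hk, Nat.cast_sub (Nat.ceil_mono hle)]
  have a1 := Nat.le_ceil ((k : ℝ) ^ β)
  have a2 := Nat.ceil_lt_add_one (show 0 ≤ (k : ℝ) ^ β by positivity)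
  have b1 := Nat.le_ceil (((k : ℝ) + 1) ^ β)
  have b2 := Nat.ceil_lt_add_one (show 0 ≤ ((k : ℝ) + 1) ^ β by positivity)
  have t1 := rpow_tangent β k (k + 1) hb.le hk0 (by linarith)
  have t2 := rpow_tangent β (k + 1) k hb.le (by linarith) hk0.le
  have p1 : 1 ≤ (k : ℝ) ^ (β - 1) := Real.one_le_rpow hk1 (by linarith)
  have p2 : 1 ≤ (2 : ℝ) ^ (β - 1) := Real.one_le_rpow (by norm_num) (by linarith)
  have p3 : ((k : ℝ) + 1) ^ (β - 1) ≤ 2 ^ (β - 1) * (k : ℝ) ^ (β - 1) := by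
    rw [← Real.mul_rpow (by norm_num) hk0.le]
    exact Real.rpow_le_rpow (by linarith) (by linarith) (by linarith)
  have e : (2 : ℝ) ^ β = 2 ^ (β - 1) * 2 := by
    rw [Real.rpow_sub_one (by norm_num)]; ring
  have p4 : β * ((k : ℝ) + 1) ^ (β - 1) ≤ β * (2 ^ (β - 1) * (k : ℝ) ^ (β - 1)) :=
    mul_le_mul_of_nonneg_left p3 (by linarith)
  have p5 : 1 ≤ (2 : ℝ) ^ (β - 1) * (k : ℝ) ^ (β - 1) := one_le_mul_of_one_le_of_one_le p2 p1
  have p6 : 1 ≤ β * ((2 : ℝ) ^ (β - 1) * (k : ℝ) ^ (β - 1)) :=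
    one_le_mul_of_one_le_of_one_le hb.le p5
  constructor
  · linarith
  · rw [e]; linarith
end

section
/- Let 0<α<1, β:=1/α, and let σ≤0 be real. Then for every real s>β the Mellin transform of τ ↦ f(τ,σ) satisfies ∫₀^∞ f(τ,σ)·τ^{s−1} dτ = −Γ(s)·(∑_{k≥1} g(k)·k^{−s})·(∑_{ℓ≥1} (−e^σ)^ℓ/ℓ^{s+1}), where Γ is the Euler gamma function and both series converge. -/
open Real MeasureTheory

/-- `f(τ,σ) = ∑_{k≥1} g(k) log(1 + e^{σ−kτ})` -/
noncomputable def f (α : ℝ) (τ σ : ℝ) : ℝ :=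
  ∑' k : ℕ, (g α k : ℝ) * Real.log (1 + Real.exp (σ - k * τ))

lemma g_zero (α : ℝ) (hα : 0 < α) : g α 0 = 0 := by
  have h : {n : ℕ | 1 ≤ n ∧ ⌊(n : ℝ) ^ α⌋ = ((0 : ℕ) : ℤ)} = ∅ := by
    ext n
    simp only [Set.mem_ofPred_eq, Set.mem_empty_iff_false, iff_false, not_and]
    intro hn h
    have h1 : (1 : ℝ) ≤ (n : ℝ) ^ α := Real.one_le_rpow (by exact_mod_cast hn) hα.le
    have h2 : (1 : ℤ) ≤ ⌊(n : ℝ) ^ α⌋ := Int.le_floor.mpr (by simpa using h1)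
    rw [h] at h2
    simp at h2
  rw [g, h, Set.ncard_empty]

lemma summable_g (α : ℝ) (hα : 0 < α) (s : ℝ) (hs : 1 / α < s) :
    Summable (fun k : ℕ => (g α k : ℝ) * (k : ℝ) ^ (-s)) := by
  have hs0 : 0 < s := lt_trans (by positivity) hs
  have has : 1 < α * s := by
    rw [div_lt_iff₀ hα] at hs; linarith
  set φ : ℕ → ℕ := fun n => ⌊((n + 1 : ℕ) : ℝ) ^ α⌋₊ with hφ
  have h1 : Summable (fun n : ℕ => ((φ n : ℕ) : ℝ) ^ (-s)) := by
    have h0 : Summable (fun n : ℕ => (1 / 2 : ℝ) ^ (-s) * ((n + 1 : ℕ) : ℝ) ^ (-(α * s))) := by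
      apply Summable.mul_left
      exact (summable_nat_add_iff (f := fun n : ℕ => (n : ℝ) ^ (-(α * s))) 1).mpr
        (Real.summable_nat_rpow.mpr (by linarith))
    refine Summable.of_nonneg_of_le (fun n => by positivity) (fun n => ?_) h0
    have hn : (1 : ℝ) ≤ ((n + 1 : ℕ) : ℝ) ^ α :=
      Real.one_le_rpow (by exact_mod_cast Nat.succ_le_succ (Nat.zero_le n)) hα.le
    have hf1 : 1 ≤ φ n := Nat.le_floor (by simpa using hn)
    have hf1' : (1 : ℝ) ≤ φ n := by exact_mod_cast hf1
    have hf2 : ((n + 1 : ℕ) : ℝ) ^ α < φ n + 1 := Nat.lt_floor_add_one _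
    have hle : (1 / 2 : ℝ) * ((n + 1 : ℕ) : ℝ) ^ α ≤ φ n := by linarith
    calc ((φ n : ℕ) : ℝ) ^ (-s) ≤ ((1 / 2 : ℝ) * ((n + 1 : ℕ) : ℝ) ^ α) ^ (-s) :=
          Real.rpow_le_rpow_of_nonpos (by linarith) hle (by linarith)
      _ = _ := by
          rw [Real.mul_rpow (by norm_num) (by positivity), ← Real.rpow_mul (by positivity)]
          ring_nf
  have h2 := ((Equiv.sigmaFiberEquiv φ).summable_iff.mpr h1).sigma
  refine h2.congr (fun k => ?_)
  have h3 : ∀ c : {x // φ x = k},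
      ((fun n : ℕ => ((φ n : ℕ) : ℝ) ^ (-s)) ∘ (Equiv.sigmaFiberEquiv φ)) ⟨k, c⟩
        = (k : ℝ) ^ (-s) := by
    intro c
    simp [Equiv.sigmaFiberEquiv, c.2]
  rw [tsum_congr h3, tsum_const, nsmul_eq_mul]
  congr 2
  have h4 : {n : ℕ | 1 ≤ n ∧ ⌊(n : ℝ) ^ α⌋ = (k : ℤ)} = (fun n => n + 1) '' {x | φ x = k} := by
    ext n
    have hfl : ∀ m : ℕ, ⌊(m : ℝ) ^ α⌋ = ((⌊(m : ℝ) ^ α⌋₊ : ℕ) : ℤ) := fun m =>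
      (Int.natCast_floor_eq_floor (by positivity)).symm
    simp only [Set.mem_ofPred_eq, Set.mem_image, hφ]
    constructor
    · rintro ⟨hn, h⟩
      refine ⟨n - 1, ?_, by omega⟩
      rw [Nat.sub_add_cancel hn]
      rw [hfl] at h
      exact_mod_cast h
    · rintro ⟨m, hm, rfl⟩
      refine ⟨by omega, ?_⟩
      rw [hfl, hm]
  rw [g, h4, Set.ncard_image_of_injective _ (add_left_injective 1)]
  exact Nat.card_coe_set_eq _

lemma summable_l (σ : ℝ) (hσ : σ ≤ 0) (s : ℝ) (hs : 0 < s) :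
    Summable (fun ℓ : ℕ => (-Real.exp σ) ^ (ℓ + 1) / ((ℓ + 1 : ℕ) : ℝ) ^ (s + 1)) := by
  have h0 : Summable (fun n : ℕ => 1 / ((n + 1 : ℕ) : ℝ) ^ (s + 1)) :=
    (summable_nat_add_iff (f := fun n : ℕ => 1 / (n : ℝ) ^ (s + 1)) 1).mpr
      (Real.summable_one_div_nat_rpow.mpr (by linarith))
  refine Summable.of_norm_bounded h0 (fun n => ?_)
  rw [norm_div, norm_pow, norm_neg, Real.norm_eq_abs, Real.norm_eq_abs, Real.abs_exp,
    abs_of_nonneg (by positivity : (0 : ℝ) ≤ ((n + 1 : ℕ) : ℝ) ^ (s + 1))]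
  gcongr
  exact pow_le_one₀ (Real.exp_pos _).le (Real.exp_le_one_iff.mpr hσ)

lemma exp_neg_le (s y : ℝ) (hs : 0 < s) (hy : 0 < y) : Real.exp (-y) ≤ s ^ s / y ^ s := by
  have h1 : y / s ≤ Real.exp (y / s) := by linarith [Real.add_one_le_exp (y / s)]
  have h2 : (y / s) ^ s ≤ Real.exp y := by
    calc (y / s) ^ s ≤ (Real.exp (y / s)) ^ s := Real.rpow_le_rpow (by positivity) h1 hs.le
      _ = Real.exp y := by rw [← Real.exp_mul]; congr 1; field_simp
  rw [Real.exp_neg, ← inv_div, ← Real.div_rpow hy.le hs.le]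
  exact inv_anti₀ (by positivity) h2

/-- The Mellin transform of `τ ↦ f(τ,σ)`: for `σ ≤ 0` and `s > β`,
`∫₀^∞ f(τ,σ) τ^{s−1} dτ = −Γ(s)·D(s)·∑_{ℓ≥1} (−e^σ)^ℓ/ℓ^{s+1}`,
where `D(s) = ∑_{k≥1} g(k) k^{−s}`, and both series converge. -/
theorem mellin_transform_of_f (α β : ℝ) (hα : 0 < α ∧ α < 1) (hβ : β = 1 / α)
    (σ : ℝ) (hσ : σ ≤ 0) (s : ℝ) (hs : β < s) :
    Summable (fun k : ℕ => (g α k : ℝ) * (k : ℝ) ^ (-s)) ∧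
    Summable (fun ℓ : ℕ => (-Real.exp σ) ^ (ℓ + 1) / ((ℓ + 1 : ℕ) : ℝ) ^ (s + 1)) ∧
    ∫ τ in Set.Ioi (0:ℝ), f α τ σ * τ ^ (s - 1)
      = -Real.Gamma s * (∑' k : ℕ, (g α k : ℝ) * (k : ℝ) ^ (-s))
        * (∑' ℓ : ℕ, (-Real.exp σ) ^ (ℓ + 1) / ((ℓ + 1 : ℕ) : ℝ) ^ (s + 1)) := by
  obtain ⟨hα0, hα1⟩ := hα
  subst hβ
  have hs0 : 0 < s := lt_trans (by positivity) hs
  have hK := summable_g α hα0 s hs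
  have hL := summable_l σ hσ s hs0
  refine ⟨hK, hL, ?_⟩
  set A : ℕ × ℕ → ℝ := fun i => (g α i.1 : ℝ) * -((-Real.exp σ) ^ (i.2 + 1) / ((i.2 + 1 : ℕ) : ℝ))
    with hA
  set p : ℕ × ℕ → ℝ := fun i => (i.1 : ℝ) * ((i.2 + 1 : ℕ) : ℝ) with hp
  have hp0 : ∀ i, 0 ≤ p i := fun i => by positivity
  have key : ∀ i, A i / p i ^ s = -(((g α i.1 : ℝ) * (i.1 : ℝ) ^ (-s)) *
      ((-Real.exp σ) ^ (i.2 + 1) / ((i.2 + 1 : ℕ) : ℝ) ^ (s + 1))) := by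
    intro i
    simp only [hA, hp]
    rw [Real.mul_rpow (by positivity) (by positivity), Real.rpow_neg (by positivity),
      Real.rpow_add (by positivity), Real.rpow_one]
    ring
  have hprod := summable_mul_of_summable_norm hK.norm hL.norm
  have hsum : Summable (fun i => A i / p i ^ s) := by
    simp_rw [key]; exact hprod.neg
  have hpos : ∀ i, A i = 0 ∨ 0 < p i := by
    intro i
    rcases Nat.eq_zero_or_pos i.1 with h | h
    · left; simp [hA, h, g_zero α hα0]
    · right
      have : (0 : ℝ) < i.1 := by exact_mod_cast h
      positivity
  have hF : ∀ t : ℝ, 0 < t → HasSum (fun i => A i * Real.exp (-p i * t)) (f α t σ) := by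
    intro t ht
    have hS : Summable (fun i => A i * Real.exp (-p i * t)) := by
      refine Summable.of_norm_bounded (hsum.norm.mul_left (s ^ s / t ^ s)) (fun i => ?_)
      rcases hpos i with h | h
      · simp [h]
      · have h1 := exp_neg_le s (p i * t) hs0 (by positivity)
        rw [Real.mul_rpow h.le ht.le] at h1
        rw [norm_mul, norm_div, Real.norm_of_nonneg (Real.exp_pos _).le,
          Real.norm_of_nonneg (by positivity : 0 ≤ p i ^ s), neg_mul]
        calc ‖A i‖ * Real.exp (-(p i * t)) ≤ ‖A i‖ * (s ^ s / (p i ^ s * t ^ s)) := by gcongr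
          _ = _ := by field_simp
    have hfib : ∀ k : ℕ, HasSum (fun l => A (k, l) * Real.exp (-p (k, l) * t))
        ((g α k : ℝ) * Real.log (1 + Real.exp (σ - k * t))) := by
      intro k
      rcases Nat.eq_zero_or_pos k with h | h
      · subst h
        simp [hA, g_zero α hα0, hasSum_zero]
      · have hk : (0 : ℝ) < k := by exact_mod_cast h
        have hx : |-Real.exp (σ - k * t)| < 1 := by
          rw [abs_neg, Real.abs_exp, Real.exp_lt_one_iff]
          nlinarith [mul_pos hk ht]
        have h1 := ((Real.hasSum_pow_div_log_of_abs_lt_one hx).neg).mul_left (g α k : ℝ)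
        rw [neg_neg, sub_neg_eq_add] at h1
        refine (congrArg (fun F : ℕ → ℝ => HasSum F _) (funext fun l => ?_)).mpr h1
        have he : Real.exp (σ - k * t) ^ (l + 1)
            = Real.exp σ ^ (l + 1) * Real.exp (-((k : ℝ) * ((l + 1 : ℕ) : ℝ)) * t) := by
          rw [← Real.exp_nat_mul, ← Real.exp_nat_mul, ← Real.exp_add]
          congr 1
          ring
        simp only [hA, hp]
        rw [neg_pow, neg_pow (Real.exp (σ - k * t)), he]
        push_cast
        ring
    have h2 := hS.hasSum.prod_fiberwise hfib
    rw [f, h2.tsum_eq]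
    exact hS.hasSum
  have hM := hasSum_mellin (a := fun i => ((A i : ℝ) : ℂ)) (p := p)
    (F := fun t => ((f α t σ : ℝ) : ℂ)) (s := (s : ℂ))
    (fun i => (hpos i).imp (fun h => by simp [h]) id) (by simpa using hs0)
    (fun t ht => by
      have := Complex.hasSum_ofReal.mpr (hF t ht)
      simpa using this)
    (by
      refine hsum.norm.congr (fun i => ?_)
      rw [norm_div, Real.norm_of_nonneg (Real.rpow_nonneg (hp0 i) s)]
      simp)
  have hI : mellin (fun t => ((f α t σ : ℝ) : ℂ)) (s : ℂ)
      = ((∫ τ in Set.Ioi (0:ℝ), f α τ σ * τ ^ (s - 1) : ℝ) : ℂ) := by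
    rw [mellin, ← integral_complex_ofReal]
    refine setIntegral_congr_fun measurableSet_Ioi (fun t ht => ?_)
    have ht' : (0 : ℝ) < t := ht
    simp only [smul_eq_mul]
    push_cast [Complex.ofReal_cpow ht'.le]
    ring
  rw [hI] at hM
  have hM' : HasSum (fun i => Real.Gamma s * (A i / p i ^ s))
      (∫ τ in Set.Ioi (0:ℝ), f α τ σ * τ ^ (s - 1)) := by
    rw [← Complex.hasSum_ofReal]
    convert hM using 2 with i
    push_cast [Complex.ofReal_cpow (hp0 i), Complex.Gamma_ofReal]
    ring
  rw [← hM'.tsum_eq, tsum_mul_left, tsum_congr key, tsum_neg, ← hK.tsum_mul_tsum hL hprod]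
  ring
end
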